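/- arXiv:2006.06307 — 9 statements merged into one kernel-verified Lean document; each statement's English description precedes it below -/
import Mathlib

section
/- For every positive integer n there exists a word of length n over a 2-letter alphabet that avoids abelian 8-powers cyclically. (In particular, A(2) ≤ 8, where A(k) is the least integer N such that for all n there exists a word of length n over a k-letter alphabet avoiding abelian N-powers cyclically.) -/
/-- `u` is an abelian `N`-power of period `m`: a concatenation of `N` nonempty
pairwise abelian-equivalent words of common length `m`. -/
def IsAbelianPower {α : Type*} (N m : ℕ) (u : List α) : Prop :=
  0 < m ∧ ∃ f : Fin N → List α,
    u = (List.ofFn f).flatten ∧ (∀ i, (f i).length = m) ∧ ∀ i j, List.Perm (f i) (f j)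

/-- `u` occurs in the infinite word `w^ω`, i.e. `u` is a factor of `w^k` for some `k`. -/
def OccursCyc {α : Type*} (w u : List α) : Prop :=
  ∃ k : ℕ, u <:+: (List.replicate k w).flatten

/-- `w` avoids abelian `N`-powers cyclically: every abelian `N`-power of period `m`
occurring in `w^ω` satisfies `m ≥ |w|`. -/
def AvoidsAbelianCyc {α : Type*} (N : ℕ) (w : List α) : Prop :=
  ∀ m u, IsAbelianPower N m u → OccursCyc w u → w.length ≤ m


/-! ### Prefix counts and cyclic prefix counts -/

/-- number of `true` letters among the first `i` letters of `w` -/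
def pc (w : List Bool) (i : ℕ) : ℕ := (w.take i).count true

/-- number of `true` letters among the first `i` letters of `w^ω` -/
def SC (w : List Bool) (i : ℕ) : ℕ := (i / w.length) * pc w w.length + pc w (i % w.length)

/-- `S` is the prefix count of a word having an abelian 8-power of period `m` at `i` -/
def Pow8 (S : ℕ → ℕ) (i m : ℕ) : Prop := ∃ c, ∀ j ≤ 8, S (i + j * m) = S i + j * c

/-- combinatorial form of cyclic avoidance of abelian 8-powers -/
def Good (w : List Bool) : Prop :=
  0 < w.length ∧ ∀ i m, 0 < m → m < w.length → ¬ Pow8 (SC w) i m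

/-- linear avoidance of abelian 4-powers -/
def PF (l : List Bool) : Prop :=
  ∀ i m c, 0 < m → i + 4 * m ≤ l.length → ¬ (∀ j ≤ 4, pc l (i + j * m) = pc l i + j * c)

lemma pc_zero (w : List Bool) : pc w 0 = 0 := by simp [pc]

lemma pc_succ (w : List Bool) (i : ℕ) (h : i < w.length) :
    pc w (i + 1) = pc w i + (if w[i] then 1 else 0) := by
  unfold pc
  rw [List.take_succ_eq_append_getElem h, List.count_append]
  cases w[i] <;> simp

lemma pc_cons_succ (b : Bool) (w : List Bool) (i : ℕ) :
    pc (b :: w) (i + 1) = (if b then 1 else 0) + pc w i := by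
  unfold pc
  cases b <;> simp [Nat.add_comm]

lemma pc_append_add (l₁ l₂ : List Bool) (i : ℕ) :
    pc (l₁ ++ l₂) (l₁.length + i) = l₁.count true + pc l₂ i := by
  unfold pc
  rw [List.take_length_add_append, List.count_append]

lemma pc_append_le (l₁ l₂ : List Bool) (i : ℕ) (h : i ≤ l₁.length) :
    pc (l₁ ++ l₂) i = pc l₁ i := by
  unfold pc
  rw [List.take_append_of_le_length h]

lemma pc_length (l : List Bool) : pc l l.length = l.count true := by simp [pc]

lemma pc_mono (w : List Bool) {i j : ℕ} (h : i ≤ j) : pc w i ≤ pc w j := by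
  unfold pc
  exact (List.take_sublist_take_left h).count_le true

lemma SC_add (w : List Bool) (hw : 0 < w.length) (t r : ℕ) (hr : r ≤ w.length) :
    SC w (t * w.length + r) = t * pc w w.length + pc w r := by
  unfold SC
  rcases Nat.lt_or_ge r w.length with h | h
  · rw [Nat.add_comm (t * _), Nat.add_mul_mod_self_right, Nat.mod_eq_of_lt h, Nat.add_mul_div_right _ _ hw,
      Nat.div_eq_of_lt h]
    simp
  · have : r = w.length := by omega
    subst this
    have : t * w.length + w.length = (t + 1) * w.length := by ring
    rw [this, Nat.mul_mod_left, Nat.mul_div_cancel _ hw, pc_zero]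
    ring

lemma SC_period (w : List Bool) (hw : 0 < w.length) (i : ℕ) :
    SC w (i + w.length) = SC w i + pc w w.length := by
  unfold SC
  rw [Nat.add_mod_right, Nat.add_div_right _ hw]
  ring

lemma SC_period_mul (w : List Bool) (hw : 0 < w.length) (i t : ℕ) :
    SC w (i + t * w.length) = SC w i + t * pc w w.length := by
  induction t with
  | zero => simp
  | succ t ih =>
    rw [Nat.succ_mul, ← Nat.add_assoc, SC_period w hw, ih]; ring

lemma SC_succ (w : List Bool) (hw : 0 < w.length) (i : ℕ) :
    SC w (i + 1) = SC w i + (if w[i % w.length]'(Nat.mod_lt _ hw) then 1 else 0) := by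
  have h1 := Nat.div_add_mod' i w.length
  have hlt := Nat.mod_lt i hw
  have e1 := SC_add w hw (i / w.length) (i % w.length) hlt.le
  have e2 := SC_add w hw (i / w.length) (i % w.length + 1) hlt
  rw [← Nat.add_assoc, h1] at e2
  rw [h1] at e1
  rw [e1, e2, pc_succ w _ hlt]
  ring

lemma SC_zero (w : List Bool) : SC w 0 = 0 := by simp [SC, pc]

lemma SC_mono (w : List Bool) (hw : 0 < w.length) : Monotone (SC w) :=
  monotone_nat_of_le_succ fun i => by rw [SC_succ w hw]; omega

/-- it suffices to look at small periods and starting positions -/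
lemma good_of (w : List Bool) (hw : 0 < w.length)
    (h : ∀ i m, 0 < m → 2 * m ≤ w.length → i < w.length → ¬ Pow8 (SC w) i m) : Good w := by
  have h1 : ∀ i m, 0 < m → 2 * m ≤ w.length → ¬ Pow8 (SC w) i m := by
    intro i m hm hm2 ⟨c, hc⟩
    refine h (i % w.length) m hm hm2 (Nat.mod_lt _ hw) ⟨c, fun j hj => ?_⟩
    have e1 := SC_period_mul w hw (i % w.length) (i / w.length)
    have e2 := SC_period_mul w hw (i % w.length + j * m) (i / w.length)
    have e3 := hc j hj
    have hd := Nat.mod_add_div' i w.length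
    rw [hd] at e1
    rw [show i % w.length + j * m + i / w.length * w.length = i + j * m by omega] at e2
    omega
  refine ⟨hw, fun i m hm hmn => ?_⟩
  rcases Nat.lt_or_ge w.length (2 * m) with h2 | h2
  · rintro ⟨c, hc⟩
    obtain ⟨d, hd⟩ : ∃ d, w.length = m + d := ⟨w.length - m, by omega⟩
    have hcp : c ≤ pc w w.length := by
      have e1 := hc 1 (by omega)
      have e2 := SC_period w hw i
      have e3 := SC_mono w hw (show i + 1 * m ≤ i + w.length by omega)
      omega
    obtain ⟨e, he⟩ : ∃ e, pc w w.length = c + e := ⟨pc w w.length - c, by omega⟩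
    refine h1 (i + 8 * m) d (by omega) (by omega) ⟨e, fun j hj => ?_⟩
    have e1 := SC_period_mul w hw (i + (8 - j) * m) j
    have e2 := hc (8 - j) (by omega)
    have e3 := hc 8 le_rfl
    rw [he] at e1
    rw [show i + (8 - j) * m + j * w.length = i + 8 * m + j * d by
      obtain ⟨s, hs⟩ : ∃ s, 8 = j + s := ⟨8 - j, by omega⟩
      rw [show 8 - j = s by omega, hs, hd]; ring] at e1
    rw [e1, e2, e3]
    obtain ⟨s, hs⟩ : ∃ s, 8 = j + s := ⟨8 - j, by omega⟩
    rw [show 8 - j = s by omega, hs]; ring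
  · exact h1 i m hm h2

/-! ### Bridge to the frozen definitions -/

/-- coding of letters -/
def toF (b : Bool) : Fin 2 := if b then 1 else 0

lemma toF_inj : Function.Injective toF := by
  intro a b; cases a <;> cases b <;> simp [toF]

lemma count_flatten_take (L : List (List Bool)) (m c : ℕ)
    (h1 : ∀ l ∈ L, l.length = m) (h2 : ∀ l ∈ L, l.count true = c) (j : ℕ) (hj : j ≤ L.length)
    (t : List Bool) : pc (L.flatten ++ t) (j * m) = j * c := by
  induction L generalizing j with
  | nil => simp at hj; subst hj; simp [pc]
  | cons l L ih =>
    cases j with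
    | zero => simp [pc]
    | succ j =>
      have e1 := h1 l (by simp)
      have e2 := h2 l (by simp)
      have := ih (fun l hl => h1 l (by simp [hl])) (fun l hl => h2 l (by simp [hl])) j
        (by simpa using hj)
      rw [List.flatten_cons, List.append_assoc,
        show (j + 1) * m = l.length + j * m by rw [e1]; ring, pc_append_add, this, e2]
      ring

lemma pc_replicate (w : List Bool) (hw : 0 < w.length) (k : ℕ) (t : List Bool) (q : ℕ)
    (hq : q ≤ k * w.length) :
    pc ((List.replicate k w).flatten ++ t) q = SC w q := by
  induction k generalizing q with
  | zero => simp at hq; subst hq; simp [pc, SC]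
  | succ k ih =>
    rw [List.replicate_succ, List.flatten_cons, List.append_assoc]
    rcases Nat.lt_or_ge q w.length with h | h
    · rw [pc_append_le _ _ _ h.le]
      have := SC_add w hw 0 q h.le
      simpa using this.symm
    · obtain ⟨r, rfl⟩ := Nat.exists_eq_add_of_le h
      rw [pc_append_add, ih r (by rw [Nat.succ_mul] at hq; omega), Nat.add_comm w.length,
        SC_period w hw, pc_length]
      ring

lemma avoids_of_good (w : List Bool) (hw : Good w) : AvoidsAbelianCyc 8 (w.map toF) := by
  obtain ⟨hw0, hw⟩ := hw
  rintro m u ⟨hm, f, hu, hlen, hperm⟩ ⟨k, s, t, hst⟩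
  rw [List.length_map]
  by_contra hlt
  push Not at hlt
  have key : ∃ s' t' : List Bool, ∃ g : Fin 8 → List Bool,
      s' ++ (List.ofFn g).flatten ++ t' = (List.replicate k w).flatten ∧
      (∀ i, (g i).length = m) ∧ ∀ i j, (g i).count true = (g j).count true := by
    let φ : Fin 2 → Bool := fun x => x == 1
    have hφ : ∀ b, φ (toF b) = b := by intro b; cases b <;> rfl
    refine ⟨s.map φ, t.map φ, fun i => (f i).map φ, ?_, fun i => by simp [hlen],
      fun i j => ((hperm i j).map φ).count_eq true⟩
    have := congrArg (List.map φ) hst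
    simp only [List.map_append, List.map_flatten, hu, List.map_replicate, List.map_map] at this
    rw [show φ ∘ toF = id from funext hφ, List.map_id] at this
    rw [← this, List.map_ofFn]
    rfl
  obtain ⟨s', t', g, hg, hgl, hgc⟩ := key
  refine hw s'.length m hm hlt ⟨(g 0).count true, fun j hj => ?_⟩
  have hL1 : ∀ l ∈ List.ofFn g, l.length = m := by
    intro l hl; rw [List.mem_ofFn] at hl; obtain ⟨i, rfl⟩ := hl; exact hgl i
  have hL2 : ∀ l ∈ List.ofFn g, l.count true = (g 0).count true := by
    intro l hl; rw [List.mem_ofFn] at hl; obtain ⟨i, rfl⟩ := hl; exact hgc i 0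
  have hlenF : (List.ofFn g).flatten.length = 8 * m := by
    rw [List.length_flatten, List.map_ofFn, List.sum_ofFn]
    simp [hgl]
  have htot : s'.length + 8 * m ≤ k * w.length := by
    have := congrArg List.length hg
    simp only [List.length_append, hlenF, List.length_flatten, List.map_replicate,
      List.sum_replicate, smul_eq_mul] at this
    omega
  have hP : ∀ j ≤ 8, SC w (s'.length + j * m) = s'.count true + j * (g 0).count true := by
    intro j hj
    rw [← pc_replicate w hw0 k [] _ (by nlinarith), List.append_nil, ← hg, List.append_assoc,
      pc_append_add, count_flatten_take _ m _ hL1 hL2 j (by simpa using hj)]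
  have h0 := hP 0 (by omega)
  simp only [Nat.zero_mul, Nat.add_zero] at h0
  rw [hP j hj, h0]


/-! ### The morphism `0 ↦ 0001`, `1 ↦ 011` -/

/-- images of letters -/
def kb (b : Bool) : List Bool :=
  if b then [false, true, true] else [false, false, false, true]

/-- the morphism -/
def K (l : List Bool) : List Bool := l.flatMap kb

lemma K_cons (b : Bool) (l : List Bool) : K (b :: l) = kb b ++ K l := by simp [K]

lemma K_length (l : List Bool) : (K l).length + l.count true = 4 * l.length := by
  induction l with
  | nil => simp [K]
  | cons b l ih =>
    rw [K_cons, List.length_append, List.count_cons, List.length_cons]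
    cases b <;> simp [kb] <;> omega

lemma K_count (l : List Bool) : (K l).count true = l.length + l.count true := by
  induction l with
  | nil => simp [K]
  | cons b l ih =>
    rw [K_cons, List.count_append, List.count_cons, List.length_cons, ih]
    cases b <;> simp [kb] <;> omega

/-- the relation between a cut of the image and a cut of the preimage -/
def CutRel (S S' : ℕ → ℕ) (q i ρ : ℕ) : Prop :=
  q + S q = 5 * i + ρ ∧ ((ρ ≤ 2 ∧ S q = i + S' i) ∨ (ρ = 3 ∧ S q = i + S' (i + 1)))

lemma cut_list (l : List Bool) (q : ℕ) (hq : q ≤ (K l).length) :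
    ∃ i ρ, CutRel (pc (K l)) (pc l) q i ρ ∧ i ≤ l.length ∧ (ρ = 3 → i + 1 ≤ l.length) := by
  induction l generalizing q with
  | nil =>
    simp [K] at hq; subst hq
    exact ⟨0, 0, ⟨by simp [pc], Or.inl ⟨by omega, by simp [pc]⟩⟩, by simp, by simp⟩
  | cons b l ih =>
    rcases Nat.lt_or_ge q (kb b).length with h | h
    · have hp : pc (K (b :: l)) q = pc (kb b) q := by rw [K_cons, pc_append_le _ _ _ h.le]
      have h0 : pc (b :: l) 0 = 0 := pc_zero _
      have h1 : pc (b :: l) (0 + 1) = (if b then 1 else 0) := by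
        rw [pc_cons_succ, pc_zero]; simp
      unfold CutRel
      rw [hp]
      cases b
      · simp [kb] at h
        interval_cases q
        · exact ⟨0, 0, by simp [pc]⟩
        · exact ⟨0, 1, by simp [pc, kb]⟩
        · exact ⟨0, 2, by simp [pc, kb]⟩
        · exact ⟨0, 3, by simp [pc, kb]⟩
      · simp [kb] at h
        interval_cases q
        · exact ⟨0, 0, by simp [pc]⟩
        · exact ⟨0, 1, by simp [pc, kb]⟩
        · exact ⟨0, 3, by simp [pc, kb]⟩
    · obtain ⟨q', rfl⟩ := Nat.exists_eq_add_of_le h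
      rw [K_cons, List.length_append] at hq
      obtain ⟨i, ρ, ⟨h1, h2⟩, h3, h4⟩ := ih q' (by omega)
      have e1 : pc (K (b :: l)) ((kb b).length + q') = (kb b).count true + pc (K l) q' := by
        rw [K_cons, pc_append_add]
      have e2 : ∀ i, pc (b :: l) (i + 1) = (if b then 1 else 0) + pc l i := pc_cons_succ b l
      refine ⟨i + 1, ρ, ⟨?_, ?_⟩, by simpa using h3, fun h => by simpa using h4 h⟩
      · rw [e1]; cases b <;> simp [kb] <;> omega
      · rw [e1, e2, e2]
        rcases h2 with ⟨h2, h5⟩ | ⟨h2, h5⟩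
        · left; rw [h5]; refine ⟨h2, ?_⟩; cases b <;> simp [kb] <;> omega
        · right; rw [h5]; refine ⟨h2, ?_⟩; cases b <;> simp [kb] <;> omega

lemma residue_aux (A B r0 r1 r2 r3 r4 i0 i1 i2 i3 i4 : ℕ)
    (h0 : A = 5 * i0 + r0) (h1 : A + B = 5 * i1 + r1) (h2 : A + 2 * B = 5 * i2 + r2)
    (h3 : A + 3 * B = 5 * i3 + r3) (h4 : A + 4 * B = 5 * i4 + r4)
    (g0 : r0 ≤ 3) (g1 : r1 ≤ 3) (g2 : r2 ≤ 3) (g3 : r3 ≤ 3) (g4 : r4 ≤ 3) : B % 5 = 0 := by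
  have : B % 5 = 0 ∨ B % 5 = 1 ∨ B % 5 = 2 ∨ B % 5 = 3 ∨ B % 5 = 4 := by omega
  rcases this with h | h | h | h | h
  · exact h
  all_goals exfalso; interval_cases r0 <;> omega

/-- desubstitution of arithmetic progressions of cuts -/
lemma desub (S S' : ℕ → ℕ) (hS' : Monotone S') (N : ℕ) (hN : 4 ≤ N) (q m c : ℕ) (hm : 0 < m)
    (I R : ℕ → ℕ) (hcut : ∀ j ≤ N, CutRel S S' (q + j * m) (I j) (R j))
    (hS : ∀ j ≤ N, S (q + j * m) = S q + j * c) :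
    ∃ M C ε, m + c = 5 * M ∧ 0 < M ∧ (∀ j ≤ N, I j = I 0 + j * M) ∧
      (∀ j ≤ N, S' (I 0 + ε + j * M) = S' (I 0 + ε) + j * C) ∧
      ((ε = 0) ∨ (ε = 1 ∧ ∀ j ≤ N, R j = 3)) := by
  have hsum : ∀ j ≤ N, (q + S q) + j * (m + c) = 5 * I j + R j := by
    intro j hj
    have := (hcut j hj).1
    rw [hS j hj] at this
    rw [← this]; ring
  have hR : ∀ j ≤ N, R j ≤ 3 := by
    intro j hj
    rcases (hcut j hj).2 with h | h <;> omega
  have hB : (m + c) % 5 = 0 := by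
    have a0 := hsum 0 (by omega)
    have a1 := hsum 1 (by omega)
    have a2 := hsum 2 (by omega)
    have a3 := hsum 3 (by omega)
    have a4 := hsum 4 (by omega)
    exact residue_aux (q + S q) (m + c) _ _ _ _ _ _ _ _ _ _ (by simpa using a0)
      (by simpa using a1) a2 a3 a4 (hR 0 (by omega)) (hR 1 (by omega)) (hR 2 (by omega))
      (hR 3 (by omega)) (hR 4 (by omega))
  obtain ⟨M, hM⟩ : ∃ M, m + c = 5 * M := ⟨(m + c) / 5, by omega⟩
  have h0 := hsum 0 (by omega)
  have hIR : ∀ j ≤ N, I j = I 0 + j * M ∧ R j = R 0 := by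
    intro j hj
    have h1 := hsum j hj
    have h2 := hR j hj
    have h3 := hR 0 (by omega)
    rw [hM] at h1 h0
    have h4 : j * (5 * M) = 5 * (j * M) := by ring
    omega
  have key : ∃ ε, ((ε = 0) ∨ (ε = 1 ∧ ∀ j ≤ N, R j = 3)) ∧
      ∀ j ≤ N, S (q + j * m) = I 0 + j * M + S' (I 0 + ε + j * M) := by
    rcases (hcut 0 (by omega)).2 with h | h
    · refine ⟨0, Or.inl rfl, fun j hj => ?_⟩
      rcases (hcut j hj).2 with h' | h'
      · rw [h'.2, (hIR j hj).1]; simp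
      · have := (hIR j hj).2; omega
    · refine ⟨1, Or.inr ⟨rfl, fun j hj => by rw [(hIR j hj).2, h.1]⟩, fun j hj => ?_⟩
      rcases (hcut j hj).2 with h' | h'
      · have := (hIR j hj).2; omega
      · rw [h'.2, (hIR j hj).1, show I 0 + 1 + j * M = I 0 + j * M + 1 by ring]
  obtain ⟨ε, hε, hk⟩ := key
  have k0 := hk 0 (by omega)
  have k1 := hk 1 (by omega)
  have s1 := hS 1 (by omega)
  have mo := hS' (show I 0 + ε ≤ I 0 + ε + 1 * M by omega)
  simp only [Nat.zero_mul, Nat.add_zero] at k0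
  obtain ⟨C, hC⟩ : ∃ C, c = M + C := ⟨c - M, by omega⟩
  refine ⟨M, C, ε, hM, by omega, fun j hj => (hIR j hj).1, fun j hj => ?_, hε⟩
  have kj := hk j hj
  have sj := hS j hj
  have : j * c = j * M + j * C := by rw [hC]; ring
  omega

lemma PF_K (l : List Bool) (hl : PF l) : PF (K l) := by
  intro q m c hm hq hS
  have hex : ∀ j, ∃ i ρ, j ≤ 4 → CutRel (pc (K l)) (pc l) (q + j * m) i ρ ∧ i ≤ l.length ∧
      (ρ = 3 → i + 1 ≤ l.length) := by
    intro j
    by_cases hj : j ≤ 4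
    · obtain ⟨i, ρ, h⟩ := cut_list l (q + j * m) (by nlinarith)
      exact ⟨i, ρ, fun _ => h⟩
    · exact ⟨0, 0, fun h => absurd h hj⟩
  choose I R hIR using hex
  obtain ⟨M, C, ε, h1, h2, h3, h4, h5⟩ := desub (pc (K l)) (pc l) (fun _ _ => pc_mono l) 4 le_rfl
    q m c hm I R (fun j hj => (hIR j hj).1) hS
  refine hl (I 0 + ε) M C h2 ?_ h4
  have a1 := (hIR 4 le_rfl).2.1
  have a2 := (hIR 4 le_rfl).2.2
  have a3 := h3 4 le_rfl
  rcases h5 with h5 | ⟨h5, h6⟩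
  · omega
  · have := a2 (h6 4 le_rfl); omega

lemma Good_K (w : List Bool) (hw : Good w) : Good (K w) := by
  obtain ⟨hw0, hw⟩ := hw
  have hlen := K_length w
  have hcnt := K_count w
  have hle := List.count_le_length (a := true) (l := w)
  have hK0 : 0 < (K w).length := by omega
  refine ⟨hK0, ?_⟩
  rintro q m hm hmn ⟨c, hc⟩
  have hex : ∀ q, ∃ i ρ, CutRel (SC (K w)) (SC w) q i ρ := by
    intro q
    obtain ⟨i, ρ, ⟨h1, h2⟩, h3, h4⟩ :=
      cut_list w (q % (K w).length) (Nat.mod_lt _ hK0).le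
    have e1 := SC_add (K w) hK0 (q / (K w).length) (q % (K w).length) (Nat.mod_lt _ hK0).le
    have hd := Nat.div_add_mod' q (K w).length
    rw [hd] at e1
    set t := q / (K w).length
    have e2 := SC_add w hw0 t i h3
    have p1 : pc (K w) (K w).length = w.length + w.count true := by rw [pc_length, hcnt]
    have p2 : pc w w.length = w.count true := pc_length w
    have hL : t * (K w).length + t * w.count true = 4 * (t * w.length) := by
      rw [← Nat.mul_add, hlen]; ring
    rw [p1, Nat.mul_add] at e1
    rw [p2] at e2
    refine ⟨t * w.length + i, ρ, by omega, ?_⟩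
    rcases h2 with ⟨h2, h5⟩ | ⟨h2, h5⟩
    · left; omega
    · right
      have e3 := SC_add w hw0 t (i + 1) (h4 h2)
      rw [p2, ← Nat.add_assoc] at e3
      omega
  choose I R hIR using fun j => hex (q + j * m)
  obtain ⟨M, C, ε, h1, h2, h3, h4, h5⟩ := desub (SC (K w)) (SC w) (SC_mono w hw0) 8 (by omega)
    q m c hm I R (fun j hj => hIR j) hc
  refine hw (I 0 + ε) M h2 ?_ ⟨C, h4⟩
  have e1 := hc 1 (by omega)
  have e2 := SC_period (K w) hK0 q
  have e3 := SC_mono (K w) hK0 (show q + 1 * m ≤ q + (K w).length by omega)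
  rw [pc_length] at e2
  omega

/-! ### Discrepancy bounds -/

/-- total weight -/
def wsum (f : Bool → ℤ) : List Bool → ℤ
  | [] => 0
  | b :: l => f b + wsum f l

/-- maximal prefix weight -/
def mp (f : Bool → ℤ) : List Bool → ℤ
  | [] => 0
  | b :: l => max 0 (f b + mp f l)

/-- maximal suffix weight -/
def ms (f : Bool → ℤ) : List Bool → ℤ
  | [] => 0
  | b :: l => max (f b + wsum f l) (ms f l)

/-- maximal factor weight -/
def mi (f : Bool → ℤ) : List Bool → ℤ
  | [] => 0
  | b :: l => max (mp f (b :: l)) (mi f l)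

lemma wsum_append (f : Bool → ℤ) (l₁ l₂ : List Bool) :
    wsum f (l₁ ++ l₂) = wsum f l₁ + wsum f l₂ := by
  induction l₁ with
  | nil => simp [wsum]
  | cons b l ih => simp [wsum, ih]; ring

lemma mp_nonneg (f : Bool → ℤ) (l : List Bool) : 0 ≤ mp f l := by
  cases l <;> simp [mp]

lemma ms_nonneg (f : Bool → ℤ) (l : List Bool) : 0 ≤ ms f l := by
  induction l with
  | nil => simp [ms]
  | cons b l ih => simp [ms, ih]

lemma mp_append (f : Bool → ℤ) (l₁ l₂ : List Bool) :
    mp f (l₁ ++ l₂) ≤ max (mp f l₁) (wsum f l₁ + mp f l₂) := by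
  induction l₁ with
  | nil => simp [mp, wsum]
  | cons b l ih =>
    simp only [List.cons_append, mp, wsum]
    omega

lemma mi_append (f : Bool → ℤ) (l₁ l₂ : List Bool) :
    mi f (l₁ ++ l₂) ≤ max (max (mi f l₁) (mi f l₂)) (ms f l₁ + mp f l₂) := by
  induction l₁ with
  | nil => simp [mi]
  | cons b l ih =>
    have := mp_append f (b :: l) l₂
    simp only [List.cons_append, mi, ms, wsum, mp] at this ⊢
    omega

lemma wsum_take (f : Bool → ℤ) (l : List Bool) (j : ℕ) : wsum f (l.take j) ≤ mp f l := by
  induction l generalizing j with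
  | nil => simp [wsum, mp]
  | cons b l ih =>
    cases j with
    | zero => simp [wsum, mp]
    | succ j =>
      have := ih j
      simp only [List.take_succ_cons, wsum, mp]
      omega

lemma wsum_infix (f : Bool → ℤ) (l : List Bool) (i j : ℕ) (h : i ≤ j) :
    wsum f (l.take j) ≤ wsum f (l.take i) + mi f l := by
  induction l generalizing i j with
  | nil => simp [wsum, mi]
  | cons b l ih =>
    cases i with
    | zero =>
      have := wsum_take f (b :: l) j
      simp only [List.take_zero, wsum, mi] at this ⊢
      omega
    | succ i =>
      obtain ⟨j, rfl⟩ : ∃ j', j = j' + 1 := ⟨j - 1, by omega⟩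
      have := ih i j (by omega)
      simp only [List.take_succ_cons, wsum, mi] at this ⊢
      omega

lemma block_bound (f : Bool → ℤ) (g : Bool → List Bool) (P Q : ℤ) (hP : 0 ≤ P) (hQ : 0 ≤ Q)
    (h0 : ∀ b, wsum f (g b) ≤ 0) (h1 : ∀ b, mp f (g b) ≤ P) (h2 : ∀ b, ms f (g b) ≤ Q)
    (h3 : ∀ b, mi f (g b) ≤ P + Q) (l : List Bool) :
    mp f (l.flatMap g) ≤ P ∧ mi f (l.flatMap g) ≤ P + Q := by
  induction l with
  | nil => simp [mp, mi]; omega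
  | cons b l ih =>
    rw [List.flatMap_cons]
    have := mp_append f (g b) (l.flatMap g)
    have := mi_append f (g b) (l.flatMap g)
    have := h0 b
    have := h1 b
    have := h2 b
    have := h3 b
    omega

lemma wsum_eq (x y : ℤ) (l : List Bool) (i : ℕ) (hi : i ≤ l.length) :
    wsum (fun b => if b then x + y else y) (l.take i) = x * pc l i + y * i := by
  induction l generalizing i with
  | nil => simp at hi; subst hi; simp [wsum, pc]
  | cons b l ih =>
    cases i with
    | zero => simp [wsum, pc]
    | succ i =>
      have := ih i (by simpa using hi)
      rw [List.take_succ_cons, wsum, this, pc_cons_succ]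
      cases b <;> simp <;> ring

/-- fourth iterate of the morphism -/
def K4 (l : List Bool) : List Bool := K (K (K (K l)))

lemma K4_eq (l : List Bool) : K4 l = l.flatMap (fun b => K4 [b]) := by
  have hK : ∀ (l : List Bool) (g : Bool → List Bool), K (l.flatMap g) = l.flatMap fun b => K (g b) := by
    intro l g; unfold K; rw [List.flatMap_assoc]
  have h1 : ∀ l, K l = l.flatMap (fun b => K [b]) := by intro l; simp [K]
  unfold K4
  conv_lhs => rw [h1 l]
  rw [hK, hK, hK]

set_option maxRecDepth 100000 in
lemma K4_bounds (l : List Bool) :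
    (∀ j ≤ (K4 l).length, 5 * pc (K4 l) j ≤ 2 * j) ∧
    (∀ i j, i ≤ j → j ≤ (K4 l).length →
      5 * pc (K4 l) j + 2 * i ≤ 5 * pc (K4 l) i + 2 * j + 22) ∧
    (∀ i j, i ≤ j → j ≤ (K4 l).length →
      8 * pc (K4 l) i + 3 * j ≤ 8 * pc (K4 l) j + 3 * i + 37) := by
  have hu := block_bound (fun b => if b then 5 + (-2) else (-2)) (fun b => K4 [b]) 0 22
    (by omega) (by omega) (by decide +kernel) (by decide +kernel) (by decide +kernel)
    (by decide +kernel) l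
  have hl := block_bound (fun b => if b then (-8) + 3 else 3) (fun b => K4 [b]) 37 0
    (by omega) (by omega) (by decide +kernel) (by decide +kernel) (by decide +kernel)
    (by decide +kernel) l
  rw [← K4_eq] at hu hl
  refine ⟨fun j hj => ?_, fun i j hij hj => ?_, fun i j hij hj => ?_⟩
  · have := wsum_take _ (K4 l) j |>.trans hu.1
    rw [wsum_eq 5 (-2) _ _ hj] at this
    omega
  · have := wsum_infix (fun b => if b then 5 + (-2) else (-2)) (K4 l) i j hij
    rw [wsum_eq 5 (-2) _ _ hj, wsum_eq 5 (-2) _ _ (hij.trans hj)] at this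
    have := hu.2
    omega
  · have := wsum_infix (fun b => if b then (-8) + 3 else 3) (K4 l) i j hij
    rw [wsum_eq (-8) 3 _ _ hj, wsum_eq (-8) 3 _ _ (hij.trans hj)] at this
    have := hl.2
    omega


/-! ### The main combinatorial argument for long words -/

/-- the prefix counts along `x, x+d, …, x+4d` form an arithmetic progression -/
def AP4 (S : ℕ → ℕ) (x d c : ℕ) : Prop := ∀ j ≤ 4, S (x + j * d) = S x + j * c

lemma AP4_of (S : ℕ → ℕ) (x d c : ℕ) (h1 : S (x + 1 * d) = S x + 1 * c)
    (h2 : S (x + 2 * d) = S x + 2 * c) (h3 : S (x + 3 * d) = S x + 3 * c)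
    (h4 : S (x + 4 * d) = S x + 4 * c) : AP4 S x d c := by
  intro j hj
  have : j = 0 ∨ j = 1 ∨ j = 2 ∨ j = 3 ∨ j = 4 := by omega
  rcases this with rfl | rfl | rfl | rfl | rfl
  · simp
  all_goals assumption

/-- the data of a word `v z` of length `n`, `|v| = a`, through its prefix count function -/
structure Zones (S : ℕ → ℕ) (n a p : ℕ) : Prop where
  ha : 163 ≤ a
  hn : 4 * a ≤ n
  hn' : n ≤ 4 * a + 3
  hper : ∀ i, S (i + n) = S i + p
  hmono : Monotone S
  hpar : n % 2 = 0 → p % 2 = 1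
  hV4 : ∀ x d c, 0 < d → x + 4 * d ≤ a → ¬ AP4 S x d c
  hZ4 : ∀ x d c, 0 < d → a ≤ x → x + 4 * d ≤ n → ¬ AP4 S x d c
  hv : 5 * S a ≤ 5 * S 0 + 2 * a
  hV : ∀ x y, x ≤ y → y ≤ a → 5 * S y + 2 * x ≤ 5 * S x + 2 * y + 22
  hZ : ∀ x y, a ≤ x → x ≤ y → y ≤ n → 5 * S x + 3 * y ≤ 5 * S y + 3 * x + 22
  hZ' : ∀ x y, a ≤ x → x ≤ y → y ≤ n → 8 * S y + 5 * x ≤ 8 * S x + 5 * y + 37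

namespace Zones

variable {S : ℕ → ℕ} {n a p : ℕ}

lemma per_mul (z : Zones S n a p) (i t : ℕ) : S (i + t * n) = S i + t * p := by
  induction t with
  | zero => simp
  | succ t ih => rw [Nat.succ_mul, ← Nat.add_assoc, z.hper, ih]; ring

lemma AP4_shift (z : Zones S n a p) (x d c t : ℕ) (h : AP4 S (x + t * n) d c) : AP4 S x d c := by
  intro j hj
  have h1 := h j hj
  have e1 := z.per_mul x t
  have e2 := z.per_mul (x + j * d) t
  rw [show x + t * n + j * d = x + j * d + t * n by ring] at h1
  omega

lemma V4 (z : Zones S n a p) (t x d c : ℕ) (hd : 0 < d) (h1 : t * n ≤ x)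
    (h2 : x + 4 * d ≤ t * n + a) : ¬ AP4 S x d c := by
  obtain ⟨x, rfl⟩ := Nat.exists_eq_add_of_le' h1
  intro h
  exact z.hV4 x d c hd (by omega) (z.AP4_shift x d c t h)

lemma Z4 (z : Zones S n a p) (t x d c : ℕ) (hd : 0 < d) (h1 : t * n + a ≤ x)
    (h2 : x + 4 * d ≤ t * n + n) : ¬ AP4 S x d c := by
  obtain ⟨x, rfl⟩ := Nat.exists_eq_add_of_le' (show t * n ≤ x by omega)
  intro h
  exact z.hZ4 x d c hd (by omega) (by omega) (z.AP4_shift x d c t h)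

lemma ZL (z : Zones S n a p) (t x y : ℕ) (h1 : t * n + a ≤ x) (h2 : x ≤ y) (h3 : y ≤ t * n + n) :
    5 * S x + 3 * y ≤ 5 * S y + 3 * x + 22 := by
  obtain ⟨x, rfl⟩ := Nat.exists_eq_add_of_le' (show t * n ≤ x by omega)
  obtain ⟨y, rfl⟩ := Nat.exists_eq_add_of_le' (show t * n ≤ y by omega)
  have := z.hZ x y (by omega) (by omega) (by omega)
  have := z.per_mul x t
  have := z.per_mul y t
  omega

lemma ZU (z : Zones S n a p) (t x y : ℕ) (h1 : t * n + a ≤ x) (h2 : x ≤ y) (h3 : y ≤ t * n + n) :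
    8 * S y + 5 * x ≤ 8 * S x + 5 * y + 37 := by
  obtain ⟨x, rfl⟩ := Nat.exists_eq_add_of_le' (show t * n ≤ x by omega)
  obtain ⟨y, rfl⟩ := Nat.exists_eq_add_of_le' (show t * n ≤ y by omega)
  have := z.hZ' x y (by omega) (by omega) (by omega)
  have := z.per_mul x t
  have := z.per_mul y t
  omega

lemma VU (z : Zones S n a p) (t x y : ℕ) (h1 : t * n ≤ x) (h2 : x ≤ y) (h3 : y ≤ t * n + a) :
    5 * S y + 2 * x ≤ 5 * S x + 2 * y + 22 := by
  obtain ⟨x, rfl⟩ := Nat.exists_eq_add_of_le' (show t * n ≤ x by omega)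
  obtain ⟨y, rfl⟩ := Nat.exists_eq_add_of_le' (show t * n ≤ y by omega)
  have := z.hV x y (by omega) (by omega)
  have := z.per_mul x t
  have := z.per_mul y t
  omega

/-- a stretch containing the whole of the second copy of `v` has few ones -/
lemma DU (z : Zones S n a p) (x y : ℕ) (h1 : a ≤ x) (h2 : x ≤ n) (h3 : n + a ≤ y)
    (h4 : y ≤ 2 * n) : 40 * S y + 25 * x + 9 * a ≤ 40 * S x + 25 * y + 370 := by
  have := z.ZU 0 x n (by omega) (by omega) (by omega)
  have := z.ZU 1 (n + a) y (by omega) (by omega) (by omega)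
  have e1 := z.per_mul 0 1
  have e2 := z.per_mul a 1
  have := z.hv
  rw [show 0 + 1 * n = n by omega] at e1
  rw [show a + 1 * n = n + a by omega] at e2
  omega

lemma no_even (z : Zones S n a p) (i m c : ℕ) (hm2 : 2 * m < n)
    (e2 : S (i + 2 * m) = S i + 2 * c)
    (e4 : S (i + 4 * m) = S i + 4 * c)
    (e6 : S (i + 6 * m) = S i + 6 * c)
    (e8 : S (i + 8 * m) = S i + 8 * c)
    (h : (i ≤ a ∧ 4 * n ≤ i + 8 * m) ∨ (i ≤ n ∧ 4 * n + a ≤ i + 8 * m)) : False := by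
  obtain ⟨d, hd⟩ : ∃ d, n = 2 * m + d := ⟨n - 2 * m, by omega⟩
  obtain ⟨x, hx⟩ : ∃ x, i = x + 4 * d := ⟨i - 4 * d, by omega⟩
  have s1 := z.per_mul (x + 1 * d) 3
  have s2 := z.per_mul (x + 2 * d) 2
  have s3 := z.per_mul (x + 3 * d) 1
  have s0 := z.per_mul x 4
  rw [show x + 4 * n = i + 8 * m by omega] at s0
  rw [show x + 1 * d + 3 * n = i + 6 * m by omega] at s1
  rw [show x + 2 * d + 2 * n = i + 4 * m by omega] at s2
  rw [show x + 3 * d + 1 * n = i + 2 * m by omega] at s3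
  have mo := z.hmono (show x ≤ x + 1 * d by omega)
  obtain ⟨e, he⟩ : ∃ e, p = 2 * c + e := ⟨p - 2 * c, by omega⟩
  have hap : AP4 S x d e := by
    apply AP4_of
    · omega
    · omega
    · omega
    · rw [← hx]; omega
  rcases h with h | h
  · exact z.V4 0 x d e (by omega) (by omega) (by omega) hap
  · exact z.Z4 0 x d e (by omega) (by omega) (by omega) hap

lemma big (z : Zones S n a p) (i m c : ℕ) (hi : 0 < i) (hin : i ≤ n) (hm : a ≤ m) (hm2 : 2 * m < n)
    (e1 : S (i + 1 * m) = S i + 1 * c)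
    (e2 : S (i + 2 * m) = S i + 2 * c)
    (e3 : S (i + 3 * m) = S i + 3 * c)
    (e4 : S (i + 4 * m) = S i + 4 * c)
    (e5 : S (i + 5 * m) = S i + 5 * c)
    (e6 : S (i + 6 * m) = S i + 6 * c)
    (e7 : S (i + 7 * m) = S i + 7 * c)
    (e8 : S (i + 8 * m) = S i + 8 * c) : False := by
  have ha := z.ha
  have hn := z.hn
  have hn' := z.hn'
  by_cases hz : 3 * m ≤ 5 * c + 22
  · rcases Nat.lt_or_ge n (i + 1 * m) with h | h
    · have := z.DU i (i + 2 * m) (by omega) (by omega) (by omega) (by omega)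
      omega
    rcases Nat.lt_or_ge n (i + 2 * m) with h | h
    · have := z.DU (i + 1 * m) (i + 3 * m) (by omega) (by omega) (by omega) (by omega)
      omega
    rcases Nat.lt_or_ge n (i + 3 * m) with h | h
    · have := z.DU (i + 2 * m) (i + 4 * m) (by omega) (by omega) (by omega) (by omega)
      omega
    rcases Nat.lt_or_ge n (i + 4 * m) with h | h
    · have := z.DU (i + 3 * m) (i + 5 * m) (by omega) (by omega) (by omega) (by omega)
      omega
    · have := z.DU (i + 4 * m) (i + 6 * m) (by omega) (by omega) (by omega) (by omega)
      omega
  · have pure : ∀ t x y, y = x + m → S y = S x + c → t * n + a ≤ x → y ≤ t * n + n → False := by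
      intro t x y hxy hs h1 h2
      have := z.ZL t x y h1 (by omega) h2
      omega
    refine z.no_even i m c hm2 e2 e4 e6 e8 ?_
    rcases Nat.lt_or_ge i a with h | h
    · left
      refine ⟨h.le, ?_⟩
      have f2 : n < i + 2 * m := by
        by_contra hh
        exact pure 0 (i + 1 * m) (i + 2 * m) (by omega) (by omega) (by omega) (by omega)
      have f4 : 2 * n < i + 4 * m := by
        by_contra hh
        exact pure 1 (i + 3 * m) (i + 4 * m) (by omega) (by omega) (by omega) (by omega)
      have f6 : 3 * n < i + 6 * m := by
        by_contra hh
        exact pure 2 (i + 5 * m) (i + 6 * m) (by omega) (by omega) (by omega) (by omega)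
      by_contra hh
      exact pure 3 (i + 7 * m) (i + 8 * m) (by omega) (by omega) (by omega) (by omega)
    · right
      refine ⟨hin, ?_⟩
      have f1 : n < i + 1 * m := by
        by_contra hh
        exact pure 0 i (i + 1 * m) (by omega) (by omega) (by omega) (by omega)
      have f3 : 2 * n < i + 3 * m := by
        by_contra hh
        exact pure 1 (i + 2 * m) (i + 3 * m) (by omega) (by omega) (by omega) (by omega)
      have f5 : 3 * n < i + 5 * m := by
        by_contra hh
        exact pure 2 (i + 4 * m) (i + 5 * m) (by omega) (by omega) (by omega) (by omega)
      have f7 : 4 * n < i + 7 * m := by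
        by_contra hh
        exact pure 3 (i + 6 * m) (i + 7 * m) (by omega) (by omega) (by omega) (by omega)
      omega

end Zones

namespace Zones

variable {S : ℕ → ℕ} {n a p : ℕ}

lemma small (z : Zones S n a p) (i m c : ℕ) (hin : i ≤ n) (hm0 : 0 < m) (hm : m < a)
    (hc : ∀ j ≤ 8, S (i + j * m) = S i + j * c) : False := by
  have ha := z.ha
  have hn := z.hn
  have hn' := z.hn'
  have ap : ∀ k ≤ 4, AP4 S (i + k * m) m c := by
    intro k hk j hj
    have h1 := hc k (by omega)
    have h2 := hc (k + j) (by omega)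
    rw [h1, Nat.add_assoc, ← Nat.add_mul, h2]
    ring
  -- windows containing the second copy of `v` against two windows in `z`
  have D : ∀ x y h, 6 * m ≤ 10 * c + 22 → h ≤ 5 → y = x + h * m → S y = S x + h * c →
      h * m ≤ 3 * a → a ≤ x → x ≤ n → n + a ≤ y → y ≤ 2 * n → False := by
    intro x y h hz hh hy hs h3 h4 h5 h6 h7
    have := z.DU x y h4 h5 h6 h7
    interval_cases h <;> omega
  have ZL : ∀ t j k, j ≤ k → k ≤ 8 → t * n + a ≤ i + j * m → i + k * m ≤ t * n + n →
      3 * ((k - j) * m) ≤ 5 * ((k - j) * c) + 22 := by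
    intro t j k hjk hk h1 h2
    obtain ⟨r, rfl⟩ := Nat.exists_eq_add_of_le hjk
    have e1 := hc j (by omega)
    have e2 := hc (j + r) hk
    rw [Nat.add_sub_cancel_left]
    rw [Nat.add_mul] at e2 h2
    rw [Nat.add_mul] at e2
    have := z.ZL t (i + j * m) (i + (j * m + r * m)) h1 (by omega) h2
    omega
  have VU : ∀ t j k, j ≤ k → k ≤ 8 → t * n ≤ i + j * m → i + k * m ≤ t * n + a →
      5 * ((k - j) * c) ≤ 2 * ((k - j) * m) + 22 := by
    intro t j k hjk hk h1 h2
    obtain ⟨r, rfl⟩ := Nat.exists_eq_add_of_le hjk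
    have e1 := hc j (by omega)
    have e2 := hc (j + r) hk
    rw [Nat.add_sub_cancel_left]
    rw [Nat.add_mul] at e2 h2
    rw [Nat.add_mul] at e2
    have := z.VU t (i + j * m) (i + (j * m + r * m)) h1 (by omega) h2
    omega
  -- the step across the second copy of `v`
  have cross : ∀ j ≤ 7, 6 * m ≤ 10 * c + 22 → a ≤ i + j * m → i + j * m ≤ n →
      n < i + j * m + m → (j ≤ 3 ∨ n + a ≤ i + 8 * m) → False := by
    intro j hj hz h1 h2 h3 h4
    have key : ∀ h ≤ 5, 2 ≤ h → j + h ≤ 8 → n + a ≤ i + j * m + h * m →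
        i + j * m + h * m ≤ n + a + m → False := by
      intro h hh hh2 hjh g1 g2
      have e1 := hc j (by omega)
      have e2 := hc (j + h) hjh
      rw [Nat.add_mul, Nat.add_mul, ← Nat.add_assoc, ← Nat.add_assoc] at e2
      refine D (i + j * m) (i + j * m + h * m) h hz hh rfl (by omega) (by omega) h1 h2 g1 (by omega)
    have h5 : j ≤ 3 ∨ n + a ≤ i + j * m + (8 - j) * m := by
      rcases h4 with h4 | h4
      · exact Or.inl h4
      · right
        rw [Nat.add_assoc, ← Nat.add_mul, Nat.add_sub_cancel' (by omega)]
        exact h4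
    have h6 : j ≤ 3 ∨ (j = 4 ∧ n + a ≤ i + j * m + 4 * m) ∨ (j = 5 ∧ n + a ≤ i + j * m + 3 * m) ∨
        (j = 6 ∧ n + a ≤ i + j * m + 2 * m) ∨ (j = 7 ∧ n + a ≤ i + j * m + 1 * m) := by
      rcases h5 with h5 | h5
      · exact Or.inl h5
      · interval_cases j <;> simp_all
    by_cases g2 : n + a ≤ i + j * m + 2 * m
    · exact key 2 (by omega) (by omega) (by omega) g2 (by omega)
    by_cases g3 : n + a ≤ i + j * m + 3 * m
    · exact key 3 (by omega) (by omega) (by omega) g3 (by omega)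
    by_cases g4 : n + a ≤ i + j * m + 4 * m
    · exact key 4 (by omega) (by omega) (by omega) g4 (by omega)
    by_cases g5 : n + a ≤ i + j * m + 5 * m
    · exact key 5 (by omega) (by omega) (by omega) g5 (by omega)
    · refine z.V4 1 (i + (j + 1) * m) m c hm0 ?_ ?_ (ap (j + 1) (by omega))
      · rw [Nat.add_mul]; omega
      · rw [Nat.add_mul]; omega
  have Z4 := fun k hk h1 h2 => z.Z4 0 (i + k * m) m c hm0 h1 h2 (ap k hk)
  have V4 := fun t k hk h1 h2 => z.V4 t (i + k * m) m c hm0 h1 h2 (ap k hk)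
  rcases Nat.lt_or_ge i a with hia | hia
  · have main : ∀ j ≤ 4, 1 ≤ j → i + (j - 1) * m < a → a ≤ i + j * m → False := by
      intro j hj hj1 h1 h2
      obtain ⟨k, rfl⟩ : ∃ k, j = k + 1 := ⟨j - 1, by omega⟩
      rw [Nat.add_sub_cancel] at h1
      have h2' := h2
      rw [Nat.add_mul] at h2'
      have hz := ZL 0 (k + 1) (k + 3) (by omega) (by omega) (by omega) (by rw [Nat.add_mul]; omega)
      rw [show k + 3 - (k + 1) = 2 by omega] at hz
      have f5 : n < i + k * m + 5 * m := by
        by_contra hh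
        exact Z4 (k + 1) (by omega) (by omega) (by rw [Nat.add_mul]; omega)
      -- the last cut before the second copy of `v`
      have fin : ∀ r, 3 ≤ r → r ≤ 4 → i + k * m + r * m ≤ n → n < i + k * m + r * m + m → False := by
        intro r hr hr4 g1 g2
        rw [Nat.add_assoc i, ← Nat.add_mul] at g1 g2
        by_cases h8 : k + r ≤ 3 ∨ n + a ≤ i + 8 * m
        · refine cross (k + r) (by omega) (by omega) ?_ g1 g2 h8
          rw [Nat.add_mul]
          have := Nat.mul_le_mul_right m hr
          omega
        · have hv : 5 * (2 * c) ≤ 2 * (2 * m) + 22 := by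
            rcases Nat.lt_or_ge 1 k with hk | hk
            · have h7 := Nat.mul_le_mul_right m (show 2 ≤ k by omega)
              have := VU 0 0 2 (by omega) (by omega) (by omega) (by omega)
              omega
            · have h7 := Nat.mul_le_mul_right m (show k + r ≤ 5 by omega)
              have := VU 1 6 8 (by omega) (by omega) (by omega) (by omega)
              omega
          omega
      by_cases f4 : i + k * m + 4 * m ≤ n
      · exact fin 4 (by omega) (by omega) f4 (by omega)
      · exact fin 3 (by omega) (by omega) (by omega) (by omega)
    by_cases s1 : a ≤ i + 1 * m
    · exact main 1 (by omega) (by omega) (by omega) s1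
    by_cases s2 : a ≤ i + 2 * m
    · exact main 2 (by omega) (by omega) (by omega) s2
    by_cases s3 : a ≤ i + 3 * m
    · exact main 3 (by omega) (by omega) (by omega) s3
    by_cases s4 : a ≤ i + 4 * m
    · exact main 4 (by omega) (by omega) (by omega) s4
    · exact V4 0 0 (by omega) (by omega) (by omega)
  · have f4 : n < i + 4 * m := by
      by_contra hh
      exact Z4 0 (by omega) (by omega) (by omega)
    by_cases g3 : i + 3 * m ≤ n
    · have := ZL 0 0 2 (by omega) (by omega) (by omega) (by omega)
      exact cross 3 (by omega) (by omega) (by omega) (by omega) (by omega) (by omega)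
    by_cases g2 : i + 2 * m ≤ n
    · have := ZL 0 0 2 (by omega) (by omega) (by omega) (by omega)
      exact cross 2 (by omega) (by omega) (by omega) (by omega) (by omega) (by omega)
    have right : ∀ s, 2 ≤ s → s + 2 ≤ 8 → n + a ≤ i + s * m → i + s * m < n + a + m →
        6 * m ≤ 10 * c + 22 := by
      intro s hs hs8 h1 h2
      have := ZL 1 s (s + 2) (by omega) (by omega) (by omega) (by rw [Nat.add_mul]; omega)
      rw [Nat.add_sub_cancel_left] at this
      omega
    by_cases g1 : i + 1 * m ≤ n
    · refine cross 1 (by omega) ?_ (by omega) (by omega) (by omega) (by omega)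
      by_cases s2 : n + a ≤ i + 2 * m
      · exact right 2 (by omega) (by omega) s2 (by omega)
      by_cases s3 : n + a ≤ i + 3 * m
      · exact right 3 (by omega) (by omega) s3 (by omega)
      by_cases s4 : n + a ≤ i + 4 * m
      · exact right 4 (by omega) (by omega) s4 (by omega)
      by_cases s5 : n + a ≤ i + 5 * m
      · exact right 5 (by omega) (by omega) s5 (by omega)
      by_cases s6 : n + a ≤ i + 6 * m
      · exact right 6 (by omega) (by omega) s6 (by omega)
      · exact (V4 1 2 (by omega) (by omega) (by omega)).elim
    · refine cross 0 (by omega) ?_ (by omega) (by omega) (by omega) (by omega)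
      by_cases s2 : n + a ≤ i + 2 * m
      · exact right 2 (by omega) (by omega) s2 (by omega)
      by_cases s3 : n + a ≤ i + 3 * m
      · exact right 3 (by omega) (by omega) s3 (by omega)
      by_cases s4 : n + a ≤ i + 4 * m
      · exact right 4 (by omega) (by omega) s4 (by omega)
      by_cases s5 : n + a ≤ i + 5 * m
      · exact right 5 (by omega) (by omega) s5 (by omega)
      · exact (V4 1 1 (by omega) (by omega) (by omega)).elim

lemma final (z : Zones S n a p) (i m : ℕ) (hi : 0 < i) (hin : i ≤ n) (hm0 : 0 < m)
    (hm : 2 * m ≤ n) : ¬ Pow8 S i m := by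
  rintro ⟨c, hc⟩
  rcases Nat.lt_or_ge m a with h | h
  · exact z.small i m c hin hm0 h hc
  rcases Nat.lt_or_ge (2 * m) n with h2 | h2
  · exact z.big i m c hi hin h h2 (hc 1 (by omega)) (hc 2 (by omega)) (hc 3 (by omega))
      (hc 4 (by omega)) (hc 5 (by omega)) (hc 6 (by omega)) (hc 7 (by omega)) (hc 8 (by omega))
  · have e := hc 2 (by omega)
    have hh : 2 * m = n := by omega
    rw [hh, z.hper] at e
    have := z.hpar (by omega)
    omega

end Zones

/-! ### Long words -/

lemma pc_drop (l : List Bool) (s r : ℕ) (h : s ≤ l.length) :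
    pc (l.drop s) r + pc l s = pc l (s + r) := by
  have := pc_append_add (l.take s) (l.drop s) r
  rw [List.take_append_drop, List.length_take, Nat.min_eq_left h] at this
  rw [this, Nat.add_comm]; rfl

lemma pc_take (l : List Bool) (a r : ℕ) (h : r ≤ a) : pc (l.take a) r = pc l r := by
  unfold pc
  rw [List.take_take, Nat.min_eq_left h]

lemma pc_not (l : List Bool) (r : ℕ) (h : r ≤ l.length) : pc (l.map not) r + pc l r = r := by
  induction l generalizing r with
  | nil => simp at h; subst h; simp [pc]
  | cons b l ih =>
    cases r with
    | zero => simp [pc]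
    | succ r =>
      have := ih r (by simpa using h)
      rw [List.map_cons, pc_cons_succ, pc_cons_succ]
      cases b <;> simp <;> omega

lemma exists_PF (N : ℕ) : ∃ l, PF l ∧ 0 < l.length ∧ N ≤ l.length := by
  induction N with
  | zero => exact ⟨[false], by intro i m c h1 h2; simp at h2; omega, by simp, by simp⟩
  | succ N ih =>
    obtain ⟨l, h1, h2, h3⟩ := ih
    have h4 := K_length l
    have h5 := List.count_le_length (a := true) (l := l)
    exact ⟨K l, PF_K l h1, by omega, by omega⟩

/-- the words used for large lengths -/
def vz (X : List Bool) (a s b : ℕ) : List Bool := X.take a ++ ((X.drop s).take b).map not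

lemma vz_length (X : List Bool) (a s b : ℕ) (h1 : a ≤ X.length) (h2 : s + b ≤ X.length) :
    (vz X a s b).length = a + b := by
  simp [vz]; omega

lemma pc_vz_left (X : List Bool) (a s b r : ℕ) (h1 : a ≤ X.length) (hr : r ≤ a) :
    pc (vz X a s b) r = pc X r := by
  unfold vz
  rw [pc_append_le _ _ _ (by simp; omega), pc_take _ _ _ hr]

lemma pc_vz_right (X : List Bool) (a s b r : ℕ) (h1 : a ≤ X.length) (h2 : s + b ≤ X.length)
    (hr : r ≤ b) : pc (vz X a s b) (a + r) + pc X (s + r) = pc X a + r + pc X s := by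
  have e1 := pc_append_add (X.take a) (((X.drop s).take b).map not) r
  rw [List.length_take, Nat.min_eq_left h1] at e1
  have e2 := pc_not ((X.drop s).take b) r (by simp; omega)
  rw [pc_take _ _ _ hr] at e2
  have e3 := pc_drop X s r (by omega)
  have e4 : (X.take a).count true = pc X a := rfl
  unfold vz
  omega

lemma pc_step (X : List Bool) (i : ℕ) : pc X (i + 1) = pc X i ∨ pc X (i + 1) = pc X i + 1 := by
  rcases Nat.lt_or_ge i X.length with h | h
  · rw [pc_succ X i h]; cases X[i] <;> simp
  · left; unfold pc; rw [List.take_of_length_le h, List.take_of_length_le (by omega)]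

lemma exists_shift (X : List Bool) (hX : PF X) (b : ℕ) (hb : 0 < b) (hlen : 4 * b ≤ X.length)
    (r : ℕ) (hr : r < 2) : ∃ s ≤ 3 * b, (pc X (s + b) - pc X s) % 2 = r := by
  by_contra hcon
  push Not at hcon
  have hD : ∀ s ≤ 3 * b, pc X (s + b) = pc X s + pc X b := by
    intro s
    induction s with
    | zero => intro _; simp [pc_zero]
    | succ s ih =>
      intro hs
      have e0 := ih (by omega)
      have h1 := pc_step X s
      have h2 := pc_step X (s + b)
      have h3 := hcon s (by omega)
      have h4 := hcon (s + 1) hs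
      have h5 := pc_mono X (show s + 1 ≤ s + 1 + b by omega)
      rw [show s + 1 + b = s + b + 1 by ring] at *
      omega
  refine hX 0 b (pc X b) hb (by omega) ?_
  have h1 := hD b (by omega)
  have h2 := hD (2 * b) (by omega)
  have h3 := hD (3 * b) (by omega)
  rw [show b + b = 2 * b by ring] at h1
  rw [show 2 * b + b = 3 * b by ring] at h2
  rw [show 3 * b + b = 4 * b by ring] at h3
  have h0 := pc_zero X
  intro j hj
  interval_cases j <;> simp only [Nat.zero_add, Nat.one_mul, Nat.zero_mul, Nat.add_zero] <;> omega

lemma zones_vz (X l : List Bool) (hXl : X = K4 l) (hX : PF X) (n a b s : ℕ) (ha : 163 ≤ a)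
    (hab : n = a + b) (h1 : 3 * a ≤ b) (h2 : b ≤ 3 * a + 3) (hl : s + b ≤ X.length)
    (hl2 : a ≤ X.length)
    (hs : (pc X (s + b) - pc X s) % 2 = (pc X a + b + 1) % 2) :
    Zones (SC (vz X a s b)) n a (pc (vz X a s b) n) := by
  have hlen := vz_length X a s b hl2 hl
  have hpos : 0 < (vz X a s b).length := by omega
  obtain ⟨b1, b2, b3⟩ := K4_bounds l
  rw [← hXl] at b1 b2 b3
  have eS : ∀ r ≤ n, SC (vz X a s b) r = pc (vz X a s b) r := by
    intro r hr
    have := SC_add (vz X a s b) hpos 0 r (by omega)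
    simpa using this
  have eV : ∀ r ≤ a, SC (vz X a s b) r = pc X r := fun r hr => by
    rw [eS r (by omega), pc_vz_left _ _ _ _ _ hl2 hr]
  have eZ : ∀ r ≤ b, SC (vz X a s b) (a + r) + pc X (s + r) = pc X a + r + pc X s := fun r hr => by
    rw [eS _ (by omega), pc_vz_right _ _ _ _ _ hl2 hl hr]
  refine ⟨ha, by omega, by omega, ?_, SC_mono _ hpos, ?_, ?_, ?_, ?_, ?_, ?_, ?_⟩
  · intro i
    have := SC_period (vz X a s b) hpos i
    rwa [hlen, ← hab] at this
  · intro _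
    have := eZ b le_rfl
    rw [← hab, eS n le_rfl] at this
    have := pc_mono X (show s ≤ s + b by omega)
    omega
  · intro x d c hd hx hap
    refine hX x d c hd (by omega) fun j hj => ?_
    have := hap j hj
    have h3 := Nat.mul_le_mul_right d hj
    rwa [eV _ (by omega), eV _ (by omega)] at this
  · intro x d c hd hx hx2 hap
    obtain ⟨y, rfl⟩ := Nat.exists_eq_add_of_le hx
    have k0 := eZ y (by omega)
    have k1 := eZ (y + 1 * d) (by omega)
    have m1 := pc_mono X (show s + y ≤ s + (y + 1 * d) by omega)
    have a1 := hap 1 (by omega)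
    rw [Nat.add_assoc a] at a1
    obtain ⟨e, he⟩ : ∃ e, d = c + e := ⟨d - c, by omega⟩
    refine hX (s + y) d e hd (by omega) fun j hj => ?_
    have h3 := Nat.mul_le_mul_right d hj
    have kj := eZ (y + j * d) (by omega)
    have aj := hap j hj
    have hjd : j * d = j * c + j * e := by rw [he]; ring
    rw [Nat.add_assoc a] at aj
    rw [Nat.add_assoc s]
    omega
  · rw [eV a le_rfl, eV 0 (by omega)]
    have := b1 a hl2
    omega
  · intro x y hxy hy
    rw [eV x (by omega), eV y hy]
    exact b2 x y hxy (by omega)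
  · intro x y hx hxy hy
    obtain ⟨x, rfl⟩ := Nat.exists_eq_add_of_le hx
    obtain ⟨y, rfl⟩ := Nat.exists_eq_add_of_le (hx.trans hxy)
    have := b2 (s + x) (s + y) (by omega) (by omega)
    have := eZ x (by omega)
    have := eZ y (by omega)
    omega
  · intro x y hx hxy hy
    obtain ⟨x, rfl⟩ := Nat.exists_eq_add_of_le hx
    obtain ⟨y, rfl⟩ := Nat.exists_eq_add_of_le (hx.trans hxy)
    have := b3 (s + x) (s + y) (by omega) (by omega)
    have := eZ x (by omega)
    have := eZ y (by omega)
    omega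

theorem long_words (n : ℕ) (hn : 652 ≤ n) : ∃ w, w.length = n ∧ Good w := by
  obtain ⟨l, hl, hl0, hlN⟩ := exists_PF (4 * n)
  have hlen : ∀ l : List Bool, l.length ≤ (K l).length := by
    intro l
    have h4 := K_length l
    have h5 := List.count_le_length (a := true) (l := l)
    omega
  have hX : PF (K4 l) := PF_K _ (PF_K _ (PF_K _ (PF_K _ hl)))
  have hXl : 4 * n ≤ (K4 l).length :=
    hlN.trans ((hlen _).trans ((hlen _).trans ((hlen _).trans (hlen _))))
  obtain ⟨a, b, hab, ha, h1, h2⟩ : ∃ a b, n = a + b ∧ 163 ≤ a ∧ 3 * a ≤ b ∧ b ≤ 3 * a + 3 :=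
    ⟨n / 4, n - n / 4, by omega, by omega, by omega, by omega⟩
  obtain ⟨s, hs, hpar⟩ := exists_shift (K4 l) hX b (by omega) (by omega)
    ((pc (K4 l) a + b + 1) % 2) (by omega)
  have z := zones_vz (K4 l) l rfl hX n a b s ha hab h1 h2 (by omega) (by omega) hpar
  have hlw := vz_length (K4 l) a s b (by omega) (by omega)
  rw [← hab] at hlw
  refine ⟨vz (K4 l) a s b, hlw, good_of _ (by omega) fun i m hm hm2 hi => ?_⟩
  rw [hlw] at hm2 hi
  rcases Nat.eq_zero_or_pos i with h0 | h0
  · subst h0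
    rintro ⟨c, hc⟩
    refine z.final n m (by omega) le_rfl hm hm2 ⟨c, fun j hj => ?_⟩
    have e1 := hc j hj
    have e2 := z.hper (0 + j * m)
    have e3 := z.hper 0
    rw [Nat.zero_add] at e1 e2 e3
    rw [Nat.add_comm n, e2, e3, e1]
    omega
  · exact z.final i m h0 hi.le hm hm2

/-! ### Packed arithmetic for the finite check -/

/-- the digit of `A` at place `i` in base `4096` -/
def dg (A i : ℕ) : ℕ := A / 4096 ^ i % 4096

lemma dg_eq (A i : ℕ) : dg A i = (A >>> (12 * i)) % 2 ^ 12 := by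
  unfold dg
  rw [Nat.shiftRight_eq_div_pow, pow_mul]
  norm_num

lemma dg_shift (A m i : ℕ) : dg (A >>> (12 * m)) i = dg A (i + m) := by
  rw [dg_eq, dg_eq, ← Nat.shiftRight_add, Nat.mul_add, Nat.add_comm]

lemma dg_xor (A C i : ℕ) : dg (A ^^^ C) i = dg A i ^^^ dg C i := by
  simp only [dg_eq, Nat.shiftRight_xor_distrib, Nat.xor_mod_two_pow]

lemma dg_or (A C i : ℕ) : dg (A ||| C) i = dg A i ||| dg C i := by
  simp only [dg_eq, Nat.shiftRight_or_distrib, Nat.or_mod_two_pow]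

lemma dg_and (A C i : ℕ) : dg (A &&& C) i = dg A i &&& dg C i := by
  simp only [dg_eq, Nat.shiftRight_and_distrib, Nat.and_mod_two_pow]

lemma dg_add (A C i : ℕ) (h : ∀ k ≤ i, dg A k + dg C k < 4096) :
    dg (A + C) i = dg A i + dg C i := by
  have hdiv : ∀ k ≤ i, (A + C) / 4096 ^ k = A / 4096 ^ k + C / 4096 ^ k := by
    intro k
    induction k with
    | zero => intro _; simp
    | succ k ih =>
      intro hk
      have h1 := h k (by omega)
      have h2 := ih (by omega)
      unfold dg at h1
      rw [pow_succ, ← Nat.div_div_eq_div_mul, ← Nat.div_div_eq_div_mul, ← Nat.div_div_eq_div_mul, h2]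
      omega
  have h1 := h i le_rfl
  have h2 := hdiv i le_rfl
  unfold dg at *
  rw [h2]
  omega

/-- packing of the first `k` values of `f` -/
def pack (f : ℕ → ℕ) : ℕ → ℕ
  | 0 => 0
  | k + 1 => f 0 + 4096 * pack (fun i => f (i + 1)) k

lemma dg_pack (f : ℕ → ℕ) (k i : ℕ) (hi : i < k) (hf : ∀ i < k, f i < 4096) :
    dg (pack f k) i = f i := by
  induction k generalizing f i with
  | zero => omega
  | succ k ih =>
    have h0 := hf 0 (by omega)
    unfold dg pack
    cases i with
    | zero => simp; omega
    | succ i =>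
      rw [pow_succ', ← Nat.div_div_eq_div_mul, Nat.add_mul_div_left _ _ (by omega),
        Nat.div_eq_of_lt h0, Nat.zero_add]
      exact ih (fun i => f (i + 1)) i (by omega) (fun i hi => hf (i + 1) (by omega))

lemma pack_add_const (f : ℕ → ℕ) (c k : ℕ) :
    pack f k + c * pack (fun _ => 1) k = pack (fun i => f i + c) k := by
  induction k generalizing f with
  | zero => simp [pack]
  | succ k ih => simp only [pack]; rw [← ih]; ring

lemma mul_pack_one (c k : ℕ) : c * pack (fun _ => 1) k = pack (fun _ => c) k := by
  induction k with
  | zero => simp [pack]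
  | succ k ih => simp only [pack]; rw [← ih]; ring

lemma pack_append (f : ℕ → ℕ) (n k : ℕ) :
    pack f n + 4096 ^ n * pack (fun i => f (n + i)) k = pack f (n + k) := by
  induction n generalizing f with
  | zero => simp [pack]
  | succ n ih =>
    rw [show n + 1 + k = (n + k) + 1 by ring]
    simp only [pack]
    rw [← ih, pow_succ]
    simp only [show ∀ i, n + 1 + i = n + i + 1 from fun i => by ring]
    ring

/-- evaluate the argument before passing it on -/
noncomputable def force {α : Type} (x : ℕ) (f : ℕ → α) : α :=
  Nat.rec (motive := fun _ => α) (f 0) (fun k _ => f (Nat.succ k)) x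

lemma force_eq {α : Type} (x : ℕ) (f : ℕ → α) : force x f = f x := by
  cases x <;> rfl

/-- packed prefix counts -/
noncomputable def bld (bits k : ℕ) : ℕ → ℕ → ℕ :=
  Nat.rec (motive := fun _ => ℕ → ℕ → ℕ) (fun _ _ => 0)
    (fun _ ih r acc => Nat.add acc (Nat.mul 4096 (ih (Nat.succ r)
      (Nat.add acc (Nat.mod (Nat.shiftRight bits r) 2))))) k

/-- packed ones -/
noncomputable def ones (k : ℕ) : ℕ :=
  Nat.rec (motive := fun _ => ℕ) 0 (fun _ ih => Nat.add 1 (Nat.mul 4096 ih)) k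

lemma ones_eq (k : ℕ) : ones k = pack (fun _ => 1) k := by
  induction k with
  | zero => rfl
  | succ k ih => show 1 + 4096 * ones k = _; rw [ih]; rfl

/-- the word with given bits -/
def wd (bits n : ℕ) : List Bool := (List.range n).map fun r => bits.testBit r

lemma wd_length (bits n : ℕ) : (wd bits n).length = n := by simp [wd]

lemma SC_wd_succ (bits n r : ℕ) (h : r < n) :
    SC (wd bits n) (r + 1) = SC (wd bits n) r + (bits >>> r) % 2 := by
  rw [SC_succ (wd bits n) (by rw [wd_length]; omega)]
  have h2 : r % (wd bits n).length = r := by rw [wd_length, Nat.mod_eq_of_lt h]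
  have h3 : (bits.testBit r).toNat = (bits >>> r) % 2 := by
    rw [Nat.toNat_testBit, Nat.shiftRight_eq_div_pow]
  simp only [h2]
  rw [← h3]
  simp only [wd, List.getElem_map, List.getElem_range]
  cases bits.testBit r <;> rfl

lemma bld_eq (bits n k : ℕ) : ∀ r, r + k ≤ n →
    bld bits k r (SC (wd bits n) r) = pack (fun i => SC (wd bits n) (r + i)) k := by
  induction k with
  | zero => intro r _; rfl
  | succ k ih =>
    intro r hr
    show SC (wd bits n) r + 4096 * bld bits k (r + 1) (SC (wd bits n) r + (bits >>> r) % 2) = _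
    rw [← SC_wd_succ bits n r (by omega), ih (r + 1) (by omega)]
    simp only [pack, Nat.add_zero]
    simp only [show ∀ i, r + 1 + i = r + (i + 1) from fun i => by ring]

/-- five periods from one -/
noncomputable def five (P q1 q2 q3 q4 Bn : ℕ) : ℕ :=
  Nat.add P (Nat.mul Bn (Nat.add (Nat.add P q1) (Nat.mul Bn (Nat.add (Nat.add P q2)
    (Nat.mul Bn (Nat.add (Nat.add P q3) (Nat.mul Bn (Nat.add P q4))))))))

lemma five_eq (S : ℕ → ℕ) (n p : ℕ) (hper : ∀ i, S (i + n) = S i + p) (R : ℕ)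
    (hR : R = pack (fun _ => 1) n) :
    five (pack S n) (1 * p * R) (2 * p * R) (3 * p * R) (4 * p * R) (4096 ^ n) = pack S (5 * n) := by
  have hp : ∀ t i, S (t * n + i) = S i + t * p := by
    intro t i
    induction t with
    | zero => simp
    | succ t ih =>
      rw [show (t + 1) * n + i = (t * n + i) + n by ring, hper, ih]; ring
  have h : ∀ t, pack S n + t * p * R = pack (fun i => S (t * n + i)) n := by
    intro t
    rw [hR, pack_add_const]
    simp only [hp]
  have ap : ∀ t k, pack (fun i => S (t * n + i)) n + 4096 ^ n * pack (fun i => S ((t + 1) * n + i)) k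
      = pack (fun i => S (t * n + i)) (n + k) := by
    intro t k
    rw [← pack_append]
    simp only [show ∀ i, (t + 1) * n + i = t * n + (n + i) from fun i => by ring]
  show pack S n + 4096 ^ n * (pack S n + 1 * p * R + 4096 ^ n * (pack S n + 2 * p * R + 4096 ^ n *
    (pack S n + 3 * p * R + 4096 ^ n * (pack S n + 4 * p * R)))) = _
  rw [h, h, h, h, ap 3, ap 2, ap 1]
  have := ap 0 (n + (n + (n + n)))
  simp only [Nat.zero_mul, Nat.zero_add] at this
  rw [this]
  congr 1
  ring

/-- check of one period -/
noncomputable def chkM (T M N m : ℕ) : Bool :=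
  force (Nat.xor (Nat.add T (Nat.shiftRight T (Nat.mul 24 m)))
      (Nat.mul 2 (Nat.shiftRight T (Nat.mul 12 m)))) fun x =>
  force (Nat.lor x (Nat.shiftRight x (Nat.mul 12 m))) fun y =>
  force (Nat.lor y (Nat.shiftRight y (Nat.mul 24 m))) fun z =>
  Nat.beq (Nat.land (Nat.add (Nat.lor z (Nat.shiftRight z (Nat.mul 36 m))) M) N) N

lemma chkM_sound (S : ℕ → ℕ) (n m T M N : ℕ) (hn : n ≤ 200) (hm : 2 * m ≤ n)
    (hS : ∀ i < 5 * n, S i < 1024)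
    (hT : ∀ i < 5 * n, dg T i = S i) (hM : ∀ i < n, dg M i = 2047) (hN : ∀ i < n, dg N i = 2048)
    (h : chkM T M N m = true) (i : ℕ) (hi : i < n) : ¬ Pow8 S i m := by
  rintro ⟨c, hc⟩
  simp only [chkM, force_eq] at h
  change Nat.beq ((_ ||| (_ >>> (36 * m))) + M &&& N) N = true at h
  set x := (T + T >>> (24 * m)) ^^^ (2 * T >>> (12 * m)) with hx
  change Nat.beq (((x ||| x >>> (12 * m)) ||| (x ||| x >>> (12 * m)) >>> (24 * m) |||
    ((x ||| x >>> (12 * m)) ||| (x ||| x >>> (12 * m)) >>> (24 * m)) >>> (36 * m)) + M &&& N) N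
      = true at h
  set y := x ||| x >>> (12 * m) with hy
  set z := y ||| y >>> (24 * m) with hz
  set u := z ||| z >>> (36 * m) with hu
  rw [show 24 * m = 12 * (2 * m) by ring] at hx hz
  rw [show 36 * m = 12 * (3 * m) by ring] at hu
  have dx : ∀ k, k + 2 * m < 5 * n →
      dg x k = (S k + S (k + 2 * m)) ^^^ (S (k + m) + S (k + m)) := by
    intro k hk
    rw [hx, dg_xor, dg_add, Nat.two_mul (T >>> _), dg_add, dg_shift, dg_shift, hT _ (by omega),
      hT _ (by omega), hT _ (by omega)]
    · intro r hr
      rw [dg_shift, hT _ (by omega)]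
      have := hS (r + m) (by omega)
      omega
    · intro r hr
      rw [dg_shift, hT _ (by omega), hT _ (by omega)]
      have := hS r (by omega)
      have := hS (r + 2 * m) (by omega)
      omega
  have bx : ∀ k, k + 2 * m < 5 * n → dg x k < 2 ^ 11 := by
    intro k hk
    rw [dx k hk]
    have := hS k (by omega)
    have := hS (k + m) (by omega)
    have := hS (k + 2 * m) (by omega)
    apply Nat.xor_lt_two_pow <;> omega
  have du : ∀ k, dg u k = ((dg x k ||| dg x (k + m)) ||| (dg x (k + 2 * m) ||| dg x (k + 2 * m + m)))
      ||| ((dg x (k + 3 * m) ||| dg x (k + 3 * m + m)) |||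
        (dg x (k + 3 * m + 2 * m) ||| dg x (k + 3 * m + 2 * m + m))) := by
    intro k
    simp only [hu, hz, hy, dg_or, dg_shift]
  have bu : ∀ k < n, dg u k < 2 ^ 11 := by
    intro k hk
    rw [du]
    repeat' apply Nat.or_lt_two_pow
    all_goals exact bx _ (by omega)
  have zx : ∀ j ≤ 6, dg x (i + j * m) = 0 := by
    intro j hj
    have hb : j * m ≤ 6 * m := Nat.mul_le_mul_right m hj
    rw [dx _ (by omega)]
    have e0 := hc j (by omega)
    have e1 := hc (j + 1) (by omega)
    have e2 := hc (j + 2) (by omega)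
    rw [show i + (j + 1) * m = i + j * m + m by ring] at e1
    rw [show i + (j + 2) * m = i + j * m + 2 * m by ring] at e2
    rw [e0, e1, e2, show S i + j * c + (S i + (j + 2) * c) = S i + (j + 1) * c + (S i + (j + 1) * c) by ring,
      Nat.xor_self]
  have zu : dg u i = 0 := by
    rw [du]
    have z0 := zx 0 (by omega)
    have z1 := zx 1 (by omega)
    have z2 := zx 2 (by omega)
    have z3 := zx 3 (by omega)
    have z4 := zx 4 (by omega)
    have z5 := zx 5 (by omega)
    have z6 := zx 6 (by omega)
    rw [show i + 2 * m + m = i + 3 * m by ring, show i + 3 * m + m = i + 4 * m by ring,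
      show i + 3 * m + 2 * m = i + 5 * m by ring, show i + 5 * m + m = i + 6 * m by ring]
    rw [show i + 0 * m = i by ring] at z0
    rw [show i + 1 * m = i + m by ring] at z1
    rw [z0, z1, z2, z3, z4, z5, z6]
    rfl
  have h' := congrArg (fun A => dg A i) (Nat.eq_of_beq_eq_true h)
  rw [dg_and, dg_add, zu, hM i hi, hN i hi] at h'
  · revert h'; decide
  · intro k hk
    have := bu k (by omega)
    rw [hM k (by omega)]
    omega

/-- check of all periods -/
noncomputable def chkMs (T M N k : ℕ) : Bool :=
  Nat.rec (motive := fun _ => Bool) true (fun k ih => and (chkM T M N (Nat.succ k)) ih) k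

lemma chkMs_sound (T M N k : ℕ) (h : chkMs T M N k = true) (m : ℕ) (hm : 0 < m) (hk : m ≤ k) :
    chkM T M N m = true := by
  induction k with
  | zero => omega
  | succ k ih =>
    have h' : (chkM T M N (k + 1) && chkMs T M N k) = true := h
    rw [Bool.and_eq_true] at h'
    rcases Nat.lt_or_ge m (k + 1) with h1 | h1
    · exact ih h'.2 (by omega)
    · rw [show m = k + 1 by omega]; exact h'.1

/-- number of ones -/
noncomputable def cnt (bits k : ℕ) : ℕ :=
  Nat.rec (motive := fun _ => ℕ) 0
    (fun k ih => Nat.add ih (Nat.mod (Nat.shiftRight bits k) 2)) k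

lemma cnt_eq (bits n k : ℕ) (hk : k ≤ n) : cnt bits k = SC (wd bits n) k := by
  induction k with
  | zero => rw [SC_zero]; rfl
  | succ k ih =>
    show cnt bits k + (bits >>> k) % 2 = _
    rw [SC_wd_succ bits n k (by omega), ih (by omega)]

/-- check of one word; `p` is the number of its ones -/
noncomputable def chkW (bits n p : ℕ) : Bool :=
  force (ones n) fun R =>
  force (bld bits n 0 0) fun P =>
  force (five P (Nat.mul (Nat.mul 1 p) R) (Nat.mul (Nat.mul 2 p) R) (Nat.mul (Nat.mul 3 p) R)
    (Nat.mul (Nat.mul 4 p) R) (Nat.pow 4096 n)) fun T =>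
  force (Nat.mul 2047 R) fun M =>
  force (Nat.mul 2048 R) fun N =>
  chkMs T M N (Nat.div n 2)

lemma chkW_sound (bits n p : ℕ) (hn : n ≤ 200) (hn0 : 0 < n)
    (hp : p = cnt bits n) (h : chkW bits n p = true) : Good (wd bits n) := by
  have hlen := wd_length bits n
  have hw : 0 < (wd bits n).length := by omega
  have hper : ∀ i, SC (wd bits n) (i + n) = SC (wd bits n) i + p := by
    intro i
    have h1 := SC_period (wd bits n) hw i
    have h2 := SC_period (wd bits n) hw 0
    rw [hlen] at h1 h2
    rw [hp, cnt_eq bits n n le_rfl]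
    rw [SC_zero, Nat.zero_add] at h2
    omega
  have hle : ∀ i, SC (wd bits n) i ≤ i := by
    intro i
    induction i with
    | zero => rw [SC_zero]
    | succ i ih =>
      have := SC_succ (wd bits n) hw i
      split at this <;> omega
  have hP : bld bits n 0 0 = pack (SC (wd bits n)) n := by
    have := bld_eq bits n n 0 (by omega)
    rw [SC_zero] at this
    simpa using this
  simp only [chkW, force_eq] at h
  rw [hP, ones_eq] at h
  have hT := five_eq (SC (wd bits n)) n p hper _ rfl
  refine good_of _ hw fun i m hm hm2 hi => ?_
  rw [hlen] at hm2 hi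
  have hc := chkMs_sound _ _ _ _ h m hm (by
    show m ≤ n / 2
    omega)
  refine chkM_sound (SC (wd bits n)) n m _ _ _ hn hm2 (fun i hi => ?_) (fun i hi => ?_)
    (fun i hi => ?_) (fun i hi => ?_) hc i hi
  · have := hle i; omega
  · change dg (five (pack (SC (wd bits n)) n) (1 * p * _) (2 * p * _) (3 * p * _) (4 * p * _)
      (4096 ^ n)) i = _
    rw [hT]
    refine dg_pack _ _ _ hi fun i hi => ?_
    have := hle i; omega
  · change dg (2047 * _) i = _
    rw [mul_pack_one]
    exact dg_pack _ _ _ hi fun i hi => by omega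
  · change dg (2048 * _) i = _
    rw [mul_pack_one]
    exact dg_pack _ _ _ hi fun i hi => by omega

/-- bits of a prefix of the fixed point of the morphism -/
def XB : ℕ := 1251552945297950677818090599922420092408393775477713032

/-- the words in the table: a factor of the fixed point and the complement of another one -/
noncomputable def mkBits (n s a t : ℕ) : ℕ :=
  Nat.add (Nat.mod (Nat.shiftRight XB s) (Nat.pow 2 a))
    (Nat.shiftLeft (Nat.sub (Nat.sub (Nat.pow 2 (Nat.sub n a)) 1)
      (Nat.mod (Nat.shiftRight XB t) (Nat.pow 2 (Nat.sub n a)))) a)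

/-- check of a table entry for length `n` -/
noncomputable def chkE (e n : ℕ) : Bool :=
  force (Nat.shiftRight e 19) fun n' =>
  force (Nat.mod (Nat.shiftRight e 11) 256) fun a =>
  force (Nat.mod (Nat.shiftRight e 1) 32) fun s =>
  force (Nat.mod (Nat.shiftRight e 6) 32) fun t =>
  force (mkBits n' s a t) fun bits =>
  force (cnt bits n') fun p =>
  and (Nat.ble n' 200) (and (Nat.ble 1 n') (and
    (cond (Nat.beq (Nat.mod e 2) 0) (Nat.beq n' n) (Nat.beq (Nat.add n p) (Nat.mul 4 n')))
    (chkW bits n' p)))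

lemma chkE_sound (e n : ℕ) (h : chkE e n = true) : ∃ w, w.length = n ∧ Good w := by
  simp only [chkE, force_eq] at h
  generalize Nat.shiftRight e 19 = n' at h
  generalize mkBits n' _ _ _ = bits at h
  rw [Bool.and_eq_true, Bool.and_eq_true, Bool.and_eq_true] at h
  obtain ⟨h1, h2, h3, h4⟩ := h
  have h1 := Nat.le_of_ble_eq_true h1
  have h2 := Nat.le_of_ble_eq_true h2
  have hg := chkW_sound bits n' _ h1 h2 rfl h4
  cases hb : Nat.beq (Nat.mod e 2) 0 with
  | true =>
    rw [hb] at h3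
    exact ⟨_, by rw [wd_length]; exact Nat.eq_of_beq_eq_true h3, hg⟩
  | false =>
    rw [hb] at h3
    have h3 : n + cnt bits n' = 4 * n' := Nat.eq_of_beq_eq_true h3
    refine ⟨K (wd bits n'), ?_, Good_K _ hg⟩
    have hl := K_length (wd bits n')
    have h5 := SC_add (wd bits n') (by rw [wd_length]; omega) 0 n' (by rw [wd_length])
    rw [Nat.zero_mul, Nat.zero_add, Nat.zero_mul, Nat.zero_add] at h5
    have h6 := pc_length (wd bits n')
    rw [wd_length] at hl h6
    rw [cnt_eq bits n' n' le_rfl] at h3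
    omega

/-- check of a list of table entries for consecutive lengths -/
noncomputable def chkL (l : List ℕ) : ℕ → Bool :=
  List.rec (motive := fun _ => ℕ → Bool) (fun _ => true)
    (fun e _ ih n => and (chkE e n) (force (Nat.succ n) ih)) l

lemma chkL_sound (l : List ℕ) (n : ℕ) (h : chkL l n = true) :
    ∀ j < l.length, ∃ w, w.length = n + j ∧ Good w := by
  induction l generalizing n with
  | nil => intro j hj; simp at hj
  | cons e l ih =>
    intro j hj
    have h' : (chkE e n && force (Nat.succ n) (chkL l)) = true := h
    rw [force_eq, Bool.and_eq_true] at h'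
    cases j with
    | zero => exact chkE_sound e n h'.1
    | succ j =>
      have := ih (n + 1) h'.2 j (by simpa using hj)
      rwa [show n + (j + 1) = n + 1 + j by ring]

/-- table of words for lengths from 1 on -/
def tab0 : List ℕ :=
  [524288, 1048704, 1572928, 2097152, 2621440, 3145728, 3670016, 4194688, 4718976, 5243008,
   5767360, 6291648, 6815872, 7340096, 7864320, 8388608, 8912896, 9437184, 9961472, 10485952,
   11010048, 11534656, 12058624, 12582912, 13107200, 13631488, 14155776, 14680320, 15204352,
   15730112, 16253120, 16777344, 17302848, 17826496, 18350080, 18875200, 19398656, 19923328,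
   20448128, 5777985, 5780097, 22020928, 6303873, 6828039, 6828033, 6828097, 6828481, 6830657,
   7354369, 7876627]

lemma tab0_ok : chkL tab0 1 = true := by decide +kernel

/-- table of words for lengths from 51 on -/
def tab1 : List ℕ :=
  [7354817, 7878663, 7878657, 7879041, 7879105, 7885441, 8405377, 8929293, 8409665, 8929473,
   8929665, 8931777, 8936001, 9979917, 9456001, 9979905, 9464449, 9980225, 9982337, 9984449,
   9997121, 11030535, 10508673, 11030593, 11030721, 11032897, 11037121, 11045569, 11557057,
   12081287, 11569793, 12081281, 12081345, 12094017, 12096129, 12102465, 12616129, 13131841,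
   12624577, 13134017, 13142465, 13148801, 13150913, 14182471, 13668801, 14182465, 13677249,
   14193025, 14708801, 14201473]

lemma tab1_ok : chkL tab1 51 = true := by decide +kernel

/-- table of words for lengths from 101 on -/
def tab2 : List ℕ :=
  [14207809, 15233025, 14725697, 15239361, 15245697, 15247809, 15254145, 15256257, 15772033,
   16282433, 16289921, 16296257, 16298369, 16304833, 16306817, 17334401, 16826817, 17342593,
   17344705, 18378759, 17353153, 17359553, 17871041, 18385601, 17879745, 18395265, 18401601,
   18403713, 18414273, 19435521, 18927937, 19436225, 19447937, 19450049, 19456385, 19464833,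
   19466945, 20486785, 19989057, 20493121, 19997505, 20511169, 20515393, 21536897, 21029057,
   21539457, 21043841, 21553281, 21561729, 21563841]

lemma tab2_ok : chkL tab2 101 = true := by decide +kernel

/-- table of words for lengths from 151 on -/
def tab3 : List ℕ :=
  [21570177, 22587841, 22590017, 22594241, 22598465, 22612289, 22629227, 22620737, 22624961,
   23638465, 23644801, 23646913, 23660737, 23667137, 24171137, 23675521, 23677633, 24695361,
   24699585, 24713409, 24717633, 24730335, 25237633, 25741697, 25246081, 25756481, 25763969,
   25766081, 25772481, 26790081, 26290305, 26796481, 26309343, 26814529, 26818753, 27840513,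
   26835679, 27840705, 27345089, 27855489, 27366239, 27869313, 27871425, 27884097, 28388161,
   28901825, 28406209, 28910273, 28919873, 28924097]

lemma tab3_ok : chkL tab3 151 = true := by decide +kernel

/-- table of words for lengths from 201 on -/
def tab4 : List ℕ :=
  [28932545, 28941023, 29448321, 29958721, 29465247, 29967169, 29981377, 29989471, 29993695,
   30987649, 30507329, 31013505, 31015617, 31029441, 31035777, 31050579, 31541953, 32057729,
   31572703, 32066177, 32080001, 32090561, 32099009, 33099137, 32608449, 33112513, 32625375,
   33133249, 33147457, 33149569, 33155935, 34160961, 33673793, 34173633, 34177857, 34195905,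
   34202241, 34204353, 34720129, 35215745, 34728577, 35226305, 35246465, 35252801, 35254913,
   35261249, 35774913, 36274753, 35783361, 36299137]

lemma tab4_ok : chkL tab4 201 = true := by decide +kernel

/-- table of words for lengths from 251 on -/
def tab5 : List ℕ :=
  [36301249, 36307585, 36309697, 37309825, 36827615, 37343361, 36836033, 37351809, 37358145,
   37360257, 38356353, 38375873, 37884481, 38398145, 38404481, 38406593, 38412929, 39406913,
   38930817, 39441217, 38945601, 39455041, 39457153, 39467713, 39977153, 40487553, 39985601,
   40501377, 40503519, 40509825, 40518273, 40520385, 41029825, 41542337, 41044609, 41554049,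
   41564609, 41568833, 41573057, 42567041, 42090963, 42595009, 42099393, 43600513, 42617281,
   42623617, 42625729, 43643457, 43147841, 43651905]

lemma tab5_ok : chkL tab5 251 = true := by decide +kernel

/-- table of words for lengths from 301 on -/
def tab6 : List ℕ :=
  [43156289, 43670251, 43674177, 43678401, 44194177, 44698241, 44202625, 44714177, 44722893,
   44722625, 44728961, 44731073, 45246849, 45753025, 45255297, 46758721, 45775297, 45779521,
   45783745, 46797249, 46312263, 46817409, 46819521, 47828289, 46827969, 46840641, 47350465,
   47858369, 47362753, 47872193, 47876417, 47880641, 47889089, 48906817, 48404865, 48921217,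
   48415425, 48924865, 49437377, 48939649, 48945985, 49961601, 49463873, 49973313, 49977537,
   49985985, 49992321, 49994433, 50510209, 51014273]

lemma tab6_ok : chkL tab6 301 = true := by decide +kernel

/-- table of words for lengths from 351 on -/
def tab7 : List ℕ :=
  [51020609, 51034433, 51036545, 51042881, 51044993, 51051329, 51564993, 52069057, 51573441,
   53085313, 52593281, 52097665, 52099777, 53117505, 52617665, 53133441, 52626113, 53152479,
   53148225, 53150337, 53666497, 54172289, 53674561, 54188225, 54194881, 54196673, 54203009,
   55224973, 54720961, 55237249, 54735681, 55245121, 55247233, 55257793, 55767233, 56277633,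
   55775681, 56291457, 56293569, 56299905, 56314719, 56310465, 57328193, 57332417, 56834689,
   57344129, 57354689, 57358913, 57868353, 58376641]

lemma tab7_ok : chkL tab7 351 = true := by decide +kernel

/-- table of words for lengths from 401 on -/
def tab8 : List ℕ :=
  [57889631, 59384449, 58396801, 58405313, 58909313, 59409793, 58929601, 59433537, 59437761,
   59441985, 59455809, 59466463, 59964097, 60479873, 59990721, 60488321, 60490433, 60504257,
   60521183, 61513025, 61028993, 61534657, 62033025, 61543105, 61556929, 62557249, 61573855,
   62578881, 62095937, 62587329, 62104415, 63597249, 63111553, 63618369, 63620481, 63635777,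
   63150721, 63648449, 64152961, 63674945, 64172673, 64673153, 64684225, 64697025, 64699009,
   64719169, 65219009, 64727647, 65227457, 65725825]

lemma tab8_ok : chkL tab8 401 = true := by decide +kernel

/-- table of words for lengths from 451 on -/
def tab9 : List ℕ :=
  [65745345, 65751681, 65767617, 65773953, 66271681, 65782401, 65784513, 66795905, 66806465,
   66820289, 66824513, 67820609, 67344513, 67829057, 67352961, 67863361, 67870849, 68860609,
   68385473, 67881439, 68397185, 68883841, 68405633, 68921409, 68925633, 69917505, 69438145,
   68942529, 69942657, 69962369, 69471077, 69976193, 70486593, 70976321, 70495041, 69999425,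
   70513089, 71017153, 70521537, 71037313, 71541377, 72037633, 71555201, 72065601, 71565791,
   72074049, 71574209, 73071297, 72596161, 72098433]

lemma tab9_ok : chkL tab9 451 = true := by decide +kernel

/-- table of words for lengths from 501 on -/
def tab10 : List ℕ :=
  [72104769, 73120385, 72622657, 74119745, 73142657, 74136641, 73151105, 73153217, 73668993,
   74173057, 73679681, 75174529, 74697281, 74201729, 74203777, 75219393, 74730189, 75239553,
   75743617, 76233537, 75758401, 75256513, 75768001, 76280513, 76284737, 76292225, 76798401,
   77303105, 76816449, 77322625, 77331091, 77333185, 77344897, 78334657, 77857409, 78357889,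
   78377409, 78381633, 77886017, 78390081, 77894465, 78408153, 79408449, 79416705, 79430081,
   79436417, 79936897, 80452673, 79960641, 80461121]

lemma tab10_ok : chkL tab10 501 = true := by decide +kernel

/-- table of words for lengths from 551 on -/
def tab11 : List ℕ :=
  [80463233, 80482753, 80486977, 80491231, 80989569, 81505345, 81015425, 81513793, 81533313,
   81535425, 81541761, 81543903, 82059649, 82560129, 82068097, 81572481, 81574593, 82592321,
   82596545, 83602241, 83114433, 83621249, 83632321, 83638657, 83145415, 83655361, 84162881,
   84663361, 84175553, 83671489, 83684161, 84693441, 84206303, 84711489, 85217665, 85722369,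
   84732639, 84732609, 85750401, 85752449, 85758785, 86756033, 86276673, 86777153, 86290561,
   86798785, 86805121, 87804481, 86311617, 87823489]

lemma tab11_ok : chkL tab11 551 = true := by decide +kernel

/-- table of words for lengths from 601 on -/
def tab12 : List ℕ :=
  [87331457, 87831937, 87849345, 87855681, 87355841, 88865601, 88377793, 88876161, 87890655,
   88884609, 88904129, 88910465, 88912577, 89924417, 89430465, 89933057, 89438913, 89958849,
   89961025, 89967297, 90478913, 90979393, 90487361, 90996097, 91007361, 91009473, 91015809,
   92019393, 91533697, 92034177, 91548481, 92057921, 92060033, 92070593, 92090753, 93076289,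
   92588481, 93093185, 92617089, 93112705, 93121153, 94122625, 93632705, 94139521, 93647489,
   94147969, 94167489, 94171713, 94189791, 95175297]

lemma tab12_ok : chkL tab12 601 = true := by decide +kernel

/-- table of words for lengths from 651 on -/
def tab13 : List ℕ :=
  [94706369]

lemma tab13_ok : chkL tab13 651 = true := by decide +kernel

theorem short_words (n : ℕ) (h1 : 1 ≤ n) (h2 : n < 652) : ∃ w, w.length = n ∧ Good w := by
  rcases Nat.lt_or_ge n 51 with h | h
  · obtain ⟨w, hw⟩ := chkL_sound tab0 1 tab0_ok (n - 1) (by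
      show n - 1 < 50
      omega)
    exact ⟨w, by omega, hw.2⟩
  rcases Nat.lt_or_ge n 101 with h | h
  · obtain ⟨w, hw⟩ := chkL_sound tab1 51 tab1_ok (n - 51) (by
      show n - 51 < 50
      omega)
    exact ⟨w, by omega, hw.2⟩
  rcases Nat.lt_or_ge n 151 with h | h
  · obtain ⟨w, hw⟩ := chkL_sound tab2 101 tab2_ok (n - 101) (by
      show n - 101 < 50
      omega)
    exact ⟨w, by omega, hw.2⟩
  rcases Nat.lt_or_ge n 201 with h | h
  · obtain ⟨w, hw⟩ := chkL_sound tab3 151 tab3_ok (n - 151) (by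
      show n - 151 < 50
      omega)
    exact ⟨w, by omega, hw.2⟩
  rcases Nat.lt_or_ge n 251 with h | h
  · obtain ⟨w, hw⟩ := chkL_sound tab4 201 tab4_ok (n - 201) (by
      show n - 201 < 50
      omega)
    exact ⟨w, by omega, hw.2⟩
  rcases Nat.lt_or_ge n 301 with h | h
  · obtain ⟨w, hw⟩ := chkL_sound tab5 251 tab5_ok (n - 251) (by
      show n - 251 < 50
      omega)
    exact ⟨w, by omega, hw.2⟩
  rcases Nat.lt_or_ge n 351 with h | h
  · obtain ⟨w, hw⟩ := chkL_sound tab6 301 tab6_ok (n - 301) (by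
      show n - 301 < 50
      omega)
    exact ⟨w, by omega, hw.2⟩
  rcases Nat.lt_or_ge n 401 with h | h
  · obtain ⟨w, hw⟩ := chkL_sound tab7 351 tab7_ok (n - 351) (by
      show n - 351 < 50
      omega)
    exact ⟨w, by omega, hw.2⟩
  rcases Nat.lt_or_ge n 451 with h | h
  · obtain ⟨w, hw⟩ := chkL_sound tab8 401 tab8_ok (n - 401) (by
      show n - 401 < 50
      omega)
    exact ⟨w, by omega, hw.2⟩
  rcases Nat.lt_or_ge n 501 with h | h
  · obtain ⟨w, hw⟩ := chkL_sound tab9 451 tab9_ok (n - 451) (by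
      show n - 451 < 50
      omega)
    exact ⟨w, by omega, hw.2⟩
  rcases Nat.lt_or_ge n 551 with h | h
  · obtain ⟨w, hw⟩ := chkL_sound tab10 501 tab10_ok (n - 501) (by
      show n - 501 < 50
      omega)
    exact ⟨w, by omega, hw.2⟩
  rcases Nat.lt_or_ge n 601 with h | h
  · obtain ⟨w, hw⟩ := chkL_sound tab11 551 tab11_ok (n - 551) (by
      show n - 551 < 50
      omega)
    exact ⟨w, by omega, hw.2⟩
  rcases Nat.lt_or_ge n 651 with h | h
  · obtain ⟨w, hw⟩ := chkL_sound tab12 601 tab12_ok (n - 601) (by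
      show n - 601 < 50
      omega)
    exact ⟨w, by omega, hw.2⟩
  rcases Nat.lt_or_ge n 652 with h | h
  · obtain ⟨w, hw⟩ := chkL_sound tab13 651 tab13_ok (n - 651) (by
      show n - 651 < 1
      omega)
    exact ⟨w, by omega, hw.2⟩
  omega


theorem binary_avoids_abelian_8_powers_cyclically :
    ∀ n : ℕ, 0 < n → ∃ w : List (Fin 2), w.length = n ∧ AvoidsAbelianCyc 8 w := by
  intro n hn
  obtain ⟨w, hl, hg⟩ : ∃ w, w.length = n ∧ Good w := by
    rcases Nat.lt_or_ge n 652 with h | h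
    · exact short_words n hn h
    · exact long_words n h
  exact ⟨w.map toF, by rw [List.length_map, hl], avoids_of_good w hg⟩
end

section
/- No word of length 8 over a 2-letter alphabet avoids abelian 4-powers cyclically; that is, for every binary word w with |w| = 8, the infinite word w^ω contains an abelian 4-power of period m with m < 8. (This gives the lower bound A(2) ≥ 5.) -/
/-- The `i`-th block of length `m` starting from position `s` in `w^5`. -/
def blk (w : List (Fin 2)) (s m i : ℕ) : List (Fin 2) :=
  ((List.replicate 5 w).flatten.drop (s + i * m)).take m

/-- Decidable search for an abelian 4-power of period `m+1` at position `s`. -/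
def chk (w : List (Fin 2)) : Bool :=
  (List.range 7).any fun m => (List.range 8).any fun s =>
    (blk w s (m+1) 0).isPerm (blk w s (m+1) 1) &&
    ((blk w s (m+1) 0).isPerm (blk w s (m+1) 2) &&
    (blk w s (m+1) 0).isPerm (blk w s (m+1) 3))

theorem chk_all : ∀ a b c d e f g h : Fin 2, chk [a, b, c, d, e, f, g, h] = true := by
  decide +kernel

theorem four_blocks {α : Type*} (L : List α) (s m : ℕ) :
    (List.ofFn fun i : Fin 4 => (L.drop (s + i * m)).take m).flatten
      = (L.drop s).take (4 * m) := by
  have e : 4 * m = m + (m + (m + m)) := by ring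
  rw [e, List.take_add, List.take_add, List.take_add]
  simp [List.ofFn_succ, List.drop_drop]
  have e2 : s + 2 * m = s + (m + m) := by ring
  have e3 : s + 3 * m = s + (m + (m + m)) := by ring
  simp [e2, e3, add_assoc]

theorem no_binary_length8_avoids_abelian_4_powers_cyclically :
    ∀ w : List (Fin 2), w.length = 8 →
      ∃ m u, m < 8 ∧ IsAbelianPower 4 m u ∧ OccursCyc w u := by
  intro w hw
  have hc : chk w = true := by
    match w, hw with
    | [a, b, c, d, e, f, g, h], _ => exact chk_all a b c d e f g h
  simp only [chk, List.any_eq_true, List.mem_range, Bool.and_eq_true, List.isPerm_iff] at hc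
  obtain ⟨m, hm, s, hs, h1, h2, h3⟩ := hc
  refine ⟨m + 1, _, by omega, ⟨by omega, fun i => blk w s (m + 1) i, rfl, ?_, ?_⟩, 5, ?_⟩
  · intro i
    have hi : (i : ℕ) * (m + 1) ≤ 3 * (m + 1) := Nat.mul_le_mul_right _ (by omega)
    simp only [blk, List.length_take, List.length_drop, List.length_flatten, List.map_replicate,
      List.sum_replicate, hw, smul_eq_mul]
    omega
  · have h0 : ∀ i : Fin 4, (blk w s (m + 1) 0).Perm (blk w s (m + 1) i) := by
      intro i
      fin_cases i
      · exact List.Perm.refl _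
      · exact h1
      · exact h2
      · exact h3
    intro i j
    exact (h0 i).symm.trans (h0 j)
  · unfold blk
    rw [four_blocks]
    exact (List.take_prefix _ _).isInfix.trans (List.drop_suffix _ _).isInfix
end

section
/- Every word of length 8 over a 3-letter alphabet contains an abelian 2-power as a factor. (This gives the lower bound A(3) ≥ 3.) -/
/-- Boolean test: `w` has an abelian square of period `1`, `2`, `3` or `4` as a prefix. -/
def sqPrefix (w : List (Fin 3)) : Bool :=
  [1, 2, 3, 4].any fun m => decide (2 * m ≤ w.length) && (w.take m).isPerm ((w.drop m).take m)

/-- Backtracking search: every extension of `w` to the left by `n` letters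
has an abelian square. -/
def searchSq : ℕ → List (Fin 3) → Bool
  | 0, w => sqPrefix w
  | n + 1, w => sqPrefix w || (searchSq n (0 :: w) && (searchSq n (1 :: w) && searchSq n (2 :: w)))

theorem sqPrefix_sound (w : List (Fin 3)) (h : sqPrefix w = true) :
    ∃ m u, IsAbelianPower 2 m u ∧ u <:+: w := by
  unfold sqPrefix at h
  rw [List.any_eq_true] at h
  obtain ⟨m, hm, h⟩ := h
  have hm0 : 0 < m := by
    simp at hm
    omega
  rw [Bool.and_eq_true, decide_eq_true_eq, List.isPerm_iff] at h
  obtain ⟨hl, hp⟩ := h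
  refine ⟨m, w.take m ++ (w.drop m).take m, ⟨hm0, ![w.take m, (w.drop m).take m], ?_, ?_, ?_⟩, ?_⟩
  · simp
  · intro i
    fin_cases i
    · simp
      omega
    · simp
      omega
  · intro i j
    fin_cases i <;> fin_cases j
    · exact List.Perm.refl _
    · exact hp
    · exact hp.symm
    · exact List.Perm.refl _
  · refine ⟨[], (w.drop m).drop m, ?_⟩
    simp only [List.nil_append, List.append_assoc, List.take_append_drop]

theorem searchSq_sound (n : ℕ) : ∀ (w v : List (Fin 3)), searchSq n w = true → v.length = n →
    ∃ m u, IsAbelianPower 2 m u ∧ u <:+: v.reverse ++ w := by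
  induction n with
  | zero =>
    intro w v h hv
    rw [List.length_eq_zero_iff] at hv
    subst hv
    exact sqPrefix_sound w h
  | succ n ih =>
    intro w v h hv
    rw [searchSq, Bool.or_eq_true, Bool.and_eq_true, Bool.and_eq_true] at h
    rcases h with h | ⟨h0, h1, h2⟩
    · obtain ⟨m, u, hu, hi⟩ := sqPrefix_sound w h
      exact ⟨m, u, hu, hi.trans (List.suffix_append _ _).isInfix⟩
    · match v, hv with
      | a :: v, hv =>
        have hv' : v.length = n := by simpa using hv
        have key : searchSq n (a :: w) = true := by
          fin_cases a
          · exact h0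
          · exact h1
          · exact h2
        simpa using ih (a :: w) v key hv'

theorem ternary_length8_contains_abelian_square :
    ∀ w : List (Fin 3), w.length = 8 →
      ∃ m u, IsAbelianPower 2 m u ∧ u <:+: w := by
  intro w hw
  have key : searchSq 8 [] = true := by decide +kernel
  simpa using searchSq_sound 8 [] w.reverse key (by simpa using hw)
end

section
/- For every positive integer n there exists a word of length n over a 4-letter alphabet that avoids abelian 3-powers cyclically. (In particular, A(4) ≤ 3.) -/
/-- Dekking's morphism. -/
def dek (x : Fin 3) : List (Fin 3) :=
  match x with
  | 0 => [0, 0, 1, 2]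
  | 1 => [1, 1, 2]
  | 2 => [0, 2, 2]

/-- Image of a word under Dekking's morphism. -/
def dekW (w : List (Fin 3)) : List (Fin 3) := w.flatMap dek

/-- Signed form of containing an abelian cube, in terms of prefixes. -/
def HasCube (w : List (Fin 3)) : Prop :=
  ∃ p0 p1 p2 p3 : List (Fin 3), p0 <+: w ∧ p1 <+: w ∧ p2 <+: w ∧ p3 <+: w ∧
    p0.length ≠ p1.length ∧
    ∀ l, p0.count l + p2.count l = 2 * p1.count l ∧ p1.count l + p3.count l = 2 * p2.count l

lemma length_eq_counts (w : List (Fin 3)) :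
    w.length = w.count 0 + w.count 1 + w.count 2 := by
  induction w with
  | nil => simp
  | cons x w ih => fin_cases x <;> simp [ih] <;> omega

lemma dekW_counts (w : List (Fin 3)) :
    (dekW w).count 0 = 2 * w.count 0 + w.count 2 ∧
    (dekW w).count 1 = w.count 0 + 2 * w.count 1 ∧
    (dekW w).count 2 = w.count 0 + w.count 1 + 2 * w.count 2 := by
  induction w with
  | nil => simp [dekW]
  | cons x w ih =>
    unfold dekW at *
    fin_cases x <;> simp [dek, ih] <;> omega

/-- The offset between a cut and the nearest canonical cut. -/
def Off (g a b c : ℤ) : Prop :=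
  (g = 0 ∧ a = 0 ∧ b = 0 ∧ c = 0) ∨ (g = 1 ∧ a = 1 ∧ b = 0 ∧ c = 0) ∨
  (g = 2 ∧ a = 0 ∧ b = -1 ∧ c = -1) ∨ (g = 4 ∧ a = 0 ∧ b = 0 ∧ c = -1)

lemma cut (w : List (Fin 3)) : ∀ p, p <+: dekW w → ∃ w1, w1 <+: w ∧ ∃ g,
    Off g ((p.count 0 : ℤ) - (2 * w1.count 0 + w1.count 2))
      ((p.count 1 : ℤ) - (w1.count 0 + 2 * w1.count 1))
      ((p.count 2 : ℤ) - (w1.count 0 + w1.count 1 + 2 * w1.count 2)) := by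
  induction w with
  | nil =>
    intro p hp
    simp [dekW] at hp
    subst hp
    exact ⟨[], by simp, 0, by simp [Off]⟩
  | cons x w ih =>
    intro p hp
    have h1 : dekW (x :: w) = dek x ++ dekW w := by simp [dekW]
    rw [h1] at hp
    rcases Nat.le_total p.length (dek x).length with h | h
    · have hp2 : p <+: dek x := List.prefix_of_prefix_length_le hp (List.prefix_append _ _) h
      have hA : [] <+: x :: w := by simp
      have hB : [x] <+: x :: w := by simp
      fin_cases x
      · simp [dek, List.prefix_cons_iff] at hp2
        rcases hp2 with rfl | ⟨t, rfl, rfl | ⟨t, rfl, rfl | ⟨t, rfl, rfl | rfl⟩⟩⟩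
        · exact ⟨_, hA, 0, by simp [Off]⟩
        · exact ⟨_, hA, 1, by simp [Off]⟩
        · exact ⟨_, hB, 2, by simp [Off]⟩
        · exact ⟨_, hB, 4, by simp [Off]⟩
        · exact ⟨_, hB, 0, by simp [Off]⟩
      · simp [dek, List.prefix_cons_iff] at hp2
        rcases hp2 with rfl | ⟨t, rfl, rfl | ⟨t, rfl, rfl | rfl⟩⟩
        · exact ⟨_, hA, 0, by simp [Off]⟩
        · exact ⟨_, hB, 2, by simp [Off]⟩
        · exact ⟨_, hB, 4, by simp [Off]⟩
        · exact ⟨_, hB, 0, by simp [Off]⟩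
      · simp [dek, List.prefix_cons_iff] at hp2
        rcases hp2 with rfl | ⟨t, rfl, rfl | ⟨t, rfl, rfl | rfl⟩⟩
        · exact ⟨_, hA, 0, by simp [Off]⟩
        · exact ⟨_, hA, 1, by simp [Off]⟩
        · exact ⟨_, hB, 4, by simp [Off]⟩
        · exact ⟨_, hB, 0, by simp [Off]⟩
    · obtain ⟨p', rfl⟩ := List.prefix_of_prefix_length_le (List.prefix_append _ _) hp h
      obtain ⟨w1, hw1, g, hg⟩ := ih p' ((List.prefix_append_right_inj _).1 hp)
      refine ⟨x :: w1, (List.prefix_append_right_inj [x]).2 hw1, g, ?_⟩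
      convert hg using 1 <;> fin_cases x <;> simp [dek] <;> ring

lemma off_mod {g a b c : ℤ} (h : Off g a b c) :
    (a + 2 * b + 3 * c) % 7 = g ∧ (g = 0 ∨ g = 1 ∨ g = 2 ∨ g = 4) := by
  unfold Off at h; omega

lemma off_det {g a b c a' b' c' : ℤ} (h : Off g a b c) (h' : Off g a' b' c') :
    a = a' ∧ b = b' ∧ c = c' := by
  unfold Off at h h'; omega

lemma ap_mod {g0 g1 g2 g3 : ℤ} (h0 : g0 = 0 ∨ g0 = 1 ∨ g0 = 2 ∨ g0 = 4)
    (h1 : g1 = 0 ∨ g1 = 1 ∨ g1 = 2 ∨ g1 = 4) (h2 : g2 = 0 ∨ g2 = 1 ∨ g2 = 2 ∨ g2 = 4)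
    (h3 : g3 = 0 ∨ g3 = 1 ∨ g3 = 2 ∨ g3 = 4)
    (h : (g0 + g2 - 2 * g1) % 7 = 0) (h' : (g1 + g3 - 2 * g2) % 7 = 0) :
    g1 = g0 ∧ g2 = g0 ∧ g3 = g0 := by
  rcases h0 with rfl | rfl | rfl | rfl <;> rcases h1 with rfl | rfl | rfl | rfl <;>
  rcases h2 with rfl | rfl | rfl | rfl <;> rcases h3 with rfl | rfl | rfl | rfl <;>
  first | (exfalso; revert h; decide) | (exfalso; revert h'; decide) | decide

lemma descent (w : List (Fin 3)) (h : HasCube (dekW w)) : HasCube w := by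
  obtain ⟨p0, p1, p2, p3, hp0, hp1, hp2, hp3, hne, hc⟩ := h
  obtain ⟨w0, hw0, g0, o0⟩ := cut w p0 hp0
  obtain ⟨w1, hw1, g1, o1⟩ := cut w p1 hp1
  obtain ⟨w2, hw2, g2, o2⟩ := cut w p2 hp2
  obtain ⟨w3, hw3, g3, o3⟩ := cut w p3 hp3
  have ha := hc 0
  have hb := hc 1
  have hd := hc 2
  obtain ⟨m0, s0⟩ := off_mod o0
  obtain ⟨m1, s1⟩ := off_mod o1
  obtain ⟨m2, s2⟩ := off_mod o2
  obtain ⟨m3, s3⟩ := off_mod o3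
  obtain ⟨e1, e2, e3⟩ := ap_mod s0 s1 s2 s3 (by omega) (by omega)
  subst e1 e2 e3
  have d1 := off_det o0 o1
  have d2 := off_det o0 o2
  have d3 := off_det o0 o3
  clear o0 o1 o2 o3 m0 m1 m2 m3 s0 s1 s2 s3
  refine ⟨w0, w1, w2, w3, hw0, hw1, hw2, hw3, ?_, ?_⟩
  · intro hl
    have : w0 = w1 :=
      (List.prefix_of_prefix_length_le hw0 hw1 hl.le).eq_of_length hl
    subst this
    apply hne
    rw [length_eq_counts, length_eq_counts]
    omega
  · intro l
    fin_cases l <;> simp <;> omega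

lemma no_cube_iter (k : ℕ) : ¬ HasCube (dekW^[k] [0]) ∧ k < (dekW^[k] [0]).length := by
  induction k with
  | zero =>
    refine ⟨?_, by simp⟩
    rintro ⟨p0, p1, p2, p3, hp0, hp1, hp2, hp3, hne, hc⟩
    have ha := hc 0
    have hb := hc 1
    have hd := hc 2
    have l0 := hp0.length_le
    have l1 := hp1.length_le
    have l2 := hp2.length_le
    have l3 := hp3.length_le
    have c0 := length_eq_counts p0
    have c1 := length_eq_counts p1
    have c2 := length_eq_counts p2
    have c3 := length_eq_counts p3
    simp at l0 l1 l2 l3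
    omega
  | succ k ih =>
    rw [Function.iterate_succ_apply']
    refine ⟨fun h => ih.1 (descent _ h), ?_⟩
    have := dekW_counts (dekW^[k] [0])
    have := length_eq_counts (dekW^[k] [0])
    have := length_eq_counts (dekW (dekW^[k] [0]))
    omega

lemma exists_free (n : ℕ) : ∃ u : List (Fin 3), u.length = n ∧ ¬ HasCube u := by
  obtain ⟨h1, h2⟩ := no_cube_iter n
  refine ⟨(dekW^[n] [0]).take n, by simp; omega, ?_⟩
  rintro ⟨p0, p1, p2, p3, hp0, hp1, hp2, hp3, h⟩
  have ht := List.take_prefix n (dekW^[n] [0])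
  exact h1 ⟨p0, p1, p2, p3, hp0.trans ht, hp1.trans ht, hp2.trans ht, hp3.trans ht, h⟩

lemma count_take_rep (w : List (Fin 4)) (hw : 0 < w.length) (l : Fin 4) (k : ℕ) :
    ∀ i, i ≤ k * w.length → ((List.replicate k w).flatten.take i).count l
      = (i / w.length) * w.count l + (w.take (i % w.length)).count l := by
  induction k with
  | zero => intro i hi; simp at hi; subst hi; simp
  | succ k ih =>
    intro i hi
    rw [List.replicate_succ, List.flatten_cons, List.take_append, List.count_append]
    rcases Nat.lt_or_ge i w.length with h | h
    · simp [Nat.div_eq_of_lt h, Nat.mod_eq_of_lt h, Nat.sub_eq_zero_of_le h.le]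
    · obtain ⟨j, rfl⟩ := Nat.exists_eq_add_of_le h
      have hj : j ≤ k * w.length := by rw [add_mul] at hi; omega
      rw [Nat.add_sub_cancel_left, ih j hj, Nat.add_mod_left, Nat.add_div_left _ hw,
        List.take_of_length_le (by omega)]
      ring

theorem quaternary_avoids_abelian_3_powers_cyclically :
    ∀ n : ℕ, 0 < n → ∃ w : List (Fin 4), w.length = n ∧ AvoidsAbelianCyc 3 w := by
  intro n hn
  obtain ⟨u, hu, hfree⟩ := exists_free (n - 1)
  obtain ⟨w, hw⟩ : ∃ w : List (Fin 4), w = u.map Fin.castSucc ++ [3] := ⟨_, rfl⟩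
  have hlen : w.length = n := by rw [hw]; simp; omega
  refine ⟨w, hlen, ?_⟩
  rintro m v ⟨hm, f, hv, hfl, hfp⟩ ⟨k, s, t, hst⟩
  rw [hlen]
  by_contra! hmn
  apply hfree
  have hv' : v = f 0 ++ (f 1 ++ f 2) := by rw [hv]; simp [List.ofFn_succ]
  have key : ∀ j, j < 4 → ∀ l, ((List.replicate k w).flatten.take (s.length + j * m)).count l
      = s.count l + j * (f 0).count l := by
    intro j hj l
    have e1 := (hfp 1 0).count_eq l
    have e2 := (hfp 2 0).count_eq l
    have l0 := hfl 0
    have l1 := hfl 1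
    have l2 := hfl 2
    rw [← hst, hv']
    interval_cases j
    · simp
    · have : s ++ (f 0 ++ (f 1 ++ f 2)) ++ t = (s ++ f 0) ++ (f 1 ++ (f 2 ++ t)) := by simp
      rw [this, List.take_left' (by simp; omega)]; simp
    · have : s ++ (f 0 ++ (f 1 ++ f 2)) ++ t = (s ++ f 0 ++ f 1) ++ (f 2 ++ t) := by simp
      rw [this, List.take_left' (by simp; omega)]; simp; omega
    · have : s ++ (f 0 ++ (f 1 ++ f 2)) ++ t = (s ++ f 0 ++ f 1 ++ f 2) ++ t := by simp
      rw [this, List.take_left' (by simp; omega)]; simp; omega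
  have hbound : s.length + 3 * m ≤ k * w.length := by
    have := congrArg List.length hst
    simp [hv', hfl] at this
    omega
  have key2 : ∀ j, j < 4 → ∀ l, s.count l + j * (f 0).count l =
      ((s.length + j * m) / n) * w.count l + (w.take ((s.length + j * m) % n)).count l := by
    intro j hj l
    rw [← key j hj l, count_take_rep w (by omega) l k _ ?_, hlen]
    have : j * m ≤ 3 * m := Nat.mul_le_mul_right _ (by omega)
    omega
  have htake : ∀ i, w.take (i % n) = (u.take (i % n)).map Fin.castSucc := by
    intro i
    have := Nat.mod_lt i hn
    rw [hw, List.take_append_of_le_length (by simp; omega), List.map_take]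
  have hnot : ∀ q : List (Fin 3), (q.map Fin.castSucc).count (3 : Fin 4) = 0 := by
    intro q
    rw [List.count_eq_zero]
    simp only [List.mem_map, not_exists, not_and]
    intro x _
    have h3 : ∀ y : Fin 3, y.castSucc ≠ (3 : Fin 4) := by decide
    exact h3 x
  have hw3 : w.count 3 = 1 := by rw [hw, List.count_append, hnot]; simp
  have hq : ∀ j, j < 4 → s.count 3 + j * (f 0).count 3 = (s.length + j * m) / n := by
    intro j hj
    rw [key2 j hj 3, htake, hnot, hw3]; simp
  have hcast : ∀ (q : List (Fin 3)) l, (q.map Fin.castSucc).count (Fin.castSucc l) = q.count l :=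
    fun q l => List.count_map_of_injective q _ (Fin.castSucc_injective 3) l
  have key3 : ∀ j, j < 4 → ∀ l : Fin 3, s.count l.castSucc + j * (f 0).count l.castSucc =
      (s.count 3 + j * (f 0).count 3) * w.count l.castSucc
        + (u.take ((s.length + j * m) % n)).count l := by
    intro j hj l
    rw [key2 j hj, ← hq j hj, htake, hcast]
  refine ⟨_, _, _, _, List.take_prefix ((s.length + 0 * m) % n) u,
    List.take_prefix ((s.length + 1 * m) % n) u, List.take_prefix ((s.length + 2 * m) % n) u,
    List.take_prefix ((s.length + 3 * m) % n) u, ?_, ?_⟩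
  · have a0 := Nat.mod_lt (s.length + 0 * m) hn
    have a1 := Nat.mod_lt (s.length + 1 * m) hn
    rw [List.length_take, List.length_take, min_eq_left (by omega), min_eq_left (by omega)]
    intro h
    have : (s.length + 0 * m) ≡ (s.length + 1 * m) [MOD n] := h
    have := (Nat.modEq_iff_dvd' (by omega)).1 this
    have := Nat.le_of_dvd (by omega) this
    omega
  · intro l
    have k0 := key3 0 (by omega) l
    have k1 := key3 1 (by omega) l
    have k2 := key3 2 (by omega) l
    have k3 := key3 3 (by omega) l
    constructor <;> nlinarith
end

section
/- For every positive integer n there exists a word of length at least n over a 4-letter alphabet that avoids abelian 2-powers cyclically; that is, there exist arbitrarily long words over 4 letters avoiding abelian squares cyclically, so A_∞(4) = 2. -/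
def kerBig : ℕ := 1010742439987920696670106479600245575434756232759795462614384377154381678571345754285102660526420544021270331627328517952376455886564218340813530063505263191569350884856512473694381669696533815243480898754549211570669384614482998033941858259218537901724783748959957965775564995932181609542688307880428344042641352646061150357907558189642633720095488467943873420052072187319641069238070669148014325722807223798573133663305536225545990835231912248110463426954622538733915353057925338758331012963105129470992030240713384793833443444544201342263889770985435785878527944441819979710759204548003241721283581616040817082458917840311181390517634710169612926718917254059710616774552074123693220067584749520221427764745997759864986484788583727766221980294227913088900585896444647187951467359729913987598773860594411880986987602073802901156036360588618167516255876213721483379346924371443584531670479312146219307044132977838898794565555057372839033981029000343229064533082062211137303963617629685390679289573641207206606936792344872229881820606663949823628655023083737943791676496334252161617777443303070008017658352660969200833415259736788841373381560310966642087880758938926719951958083429194242372634322759566523446516591596921649821526100377330155297239810039487883901427687347407078529209407694663486509382298493368266295111320026879651588164160770638287744930386895646979009391184737284976065281196718057268713392460108974735378644813039480712284455571810448819481358890758931363167157748127688912162940351470721936499257861491637328908711085341317105250863317063421090458489241031421804513570076684389636331551030430499672138546681558845207293960628316044247129870566790739276977279602339236141190753496337446063425424272145066560883830009769104797950106747225354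083812813500718864526674988091465840325230072666953929179740710336868820952895251440989335987879968387274084120720058653553083904758901260674590001977246934431536228101448534690318530018477575707861679250412759504969931084990809212559763765930132079774239810860652915737319588478645162850115633678159317948257110

def kerWord : ℕ := 227193366226236800249709662197971513346990172696100

/-- Table of weighted prefix sums of the image of the letter `b` (prefix length `r`). -/
def kerTab (b r : ℕ) : ℕ := (kerBig >>> (20 * (86 * b + r))) % 1048576

/-- The `r`-th letter of Keränen's word of length 85. -/
def kerK (r : ℕ) : Fin 4 := Fin.ofNat 4 (kerWord >>> (2 * r))

def kerW : Fin 4 → ℕ := ![1615, 1785, 6375, 0]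

theorem kerTab_zero : ∀ b : Fin 4, kerTab b 0 = 86870 := by decide +kernel

theorem kerTab_last : ∀ b : Fin 4, kerTab b 85 = 86870 + if b = 0 then 43435 else 0 := by
  decide +kernel

theorem kerTab_step : ∀ b : Fin 4, ∀ r < 85,
    kerTab b (r + 1) + 2316 = kerTab b r + kerW (b + kerK r) := by decide +kernel

theorem kerTab_bd : ∀ b : Fin 4, ∀ r < 85, kerTab b r < 140000 := by decide +kernel

/-- Bounded quantifier as a Boolean. -/
def kerAll (n : ℕ) (f : ℕ → Bool) : Bool :=
  Nat.rec (motive := fun _ => Bool) true (fun k ih => cond (f k) ih false) n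

theorem kerAll_spec {n : ℕ} {f : ℕ → Bool} (h : kerAll n f = true) : ∀ k < n, f k = true := by
  induction n with
  | zero => intro k hk; omega
  | succ n ih =>
    have h' : cond (f n) (kerAll n f) false = true := h
    intro k hk
    cases hf : f n with
    | false => rw [hf] at h'; simp at h'
    | true =>
      rw [hf] at h'
      rcases Nat.lt_succ_iff_lt_or_eq.mp hk with h1 | h1
      · exact ih h' k h1
      · rw [h1]; exact hf

def kerTabF (b r : ℕ) : ℕ :=
  Nat.mod (Nat.shiftRight kerBig (Nat.mul 20 (Nat.add (Nat.mul 86 b) r))) 1048576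

theorem kerTabF_eq (b r : ℕ) : kerTabF b r = kerTab b r := rfl

def kerU (b s : ℕ) : ℕ :=
  cond (Nat.blt s 85) (kerTabF 0 s) (Nat.add 43435 (kerTabF b (Nat.sub s 85)))

def kerShortB (b p m : ℕ) : Bool :=
  cond (Nat.beq (Nat.add (kerU b p) (kerU b (Nat.add p (Nat.mul 2 (Nat.add m 1)))))
    (Nat.mul 2 (kerU b (Nat.add p (Nat.add m 1))))) false true

theorem kerShortB_all : kerAll 3 (fun b => kerAll 85 fun p =>
    kerAll (Nat.div (Nat.sub 169 p) 2) fun m => kerShortB (Nat.add b 1) p m) = true := by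
  decide +kernel

def kerOk (r0 r1 r2 b0 b2 : ℕ) : Bool :=
  decide (∃ d0 d1 d2 : Fin 2, ∀ i : Fin 4,
      2 * kerTab (0 - i : Fin 4) r1 + 43435 * ((if Fin.ofNat 4 b0 = i then d0.val else 0)
        + (if Fin.ofNat 4 b2 = i then d2.val else 0)) =
      kerTab (Fin.ofNat 4 b0 - i : Fin 4) r0 + kerTab (Fin.ofNat 4 b2 - i : Fin 4) r2 +
        43435 * (2 * (if 0 = i then d1.val else 0)))

def kerMainB (r0 r1 r2 b0 b2 : ℕ) : Bool :=
  cond (Nat.beq (Nat.mod (Nat.sub (Nat.add (Nat.mul 2 (kerTabF 0 r1)) 304045)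
    (Nat.add (kerTabF b0 r0) (kerTabF b2 r2))) 43435) 0) (kerOk r0 r1 r2 b0 b2) true

theorem kerMainB_all : kerAll 85 (fun r1 => kerAll 85 fun r0 => kerAll 4 fun b0 => kerAll 4 fun b2 =>
    kerMainB r0 r1 (Nat.mod (Nat.sub (Nat.add (Nat.mul 2 r1) 85) r0) 85) b0 b2) = true := by
  decide +kernel

theorem ker_short (b : Fin 4) (hb : b ≠ 0) (p m : ℕ) (hp : p < 85) (hm : 0 < m)
    (hpm : p + 2 * m < 170) : kerU b p + kerU b (p + 2 * m) ≠ 2 * kerU b (p + m) := by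
  have hb0 : b.val ≠ 0 := fun h => hb (Fin.ext h)
  have h1 := kerAll_spec kerShortB_all (b.val - 1) (by omega)
  have h2 := kerAll_spec h1 p hp
  have hd : Nat.div (Nat.sub 169 p) 2 = (169 - p) / 2 := rfl
  have h3 := kerAll_spec h2 (m - 1) (by rw [hd]; omega)
  have e1 : Nat.add (b.val - 1) 1 = b.val := by
    show b.val - 1 + 1 = b.val
    omega
  have e2 : Nat.add (m - 1) 1 = m := by
    show m - 1 + 1 = m
    omega
  simp only [e1, kerShortB, e2] at h3
  intro hh
  have h4 : Nat.beq (Nat.add (kerU b p) (kerU b (Nat.add p (Nat.mul 2 m))))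
    (Nat.mul 2 (kerU b (Nat.add p m))) = true := Nat.beq_eq.mpr hh
  rw [h4] at h3
  simp at h3

theorem kerU_lt (b s : ℕ) (h : s < 85) : kerU b s = kerTab 0 s := by
  have : Nat.blt s 85 = true := by simpa using h
  simp only [kerU, this, kerTabF_eq, cond_true]

theorem kerU_ge (b s : ℕ) (h : 85 ≤ s) : kerU b s = 43435 + kerTab b (s - 85) := by
  have : Nat.blt s 85 = false := by
    rw [Bool.eq_false_iff]
    simpa using h
  simp only [kerU, this, kerTabF_eq, cond_false]
  rfl

theorem ker_main (r0 r1 r2 : ℕ) (b0 b2 : Fin 4) (h0 : r0 < 85) (h1 : r1 < 85)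
    (h2 : r2 = (2 * r1 + 85 - r0) % 85)
    (hd : (2 * kerTab 0 r1 + 304045 - (kerTab b0 r0 + kerTab b2 r2)) % 43435 = 0) :
    ∃ d0 d1 d2 : Fin 2, ∀ i : Fin 4,
      2 * kerTab (0 - i : Fin 4) r1 + 43435 * ((if b0 = i then d0.val else 0)
        + (if b2 = i then d2.val else 0)) =
      kerTab (b0 - i : Fin 4) r0 + kerTab (b2 - i : Fin 4) r2 +
        43435 * (2 * (if 0 = i then d1.val else 0)) := by
  have h3 := kerAll_spec (kerAll_spec (kerAll_spec (kerAll_spec kerMainB_all r1 h1) r0 h0)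
    b0 b0.isLt) b2 b2.isLt
  have e : Nat.mod (Nat.sub (Nat.add (Nat.mul 2 r1) 85) r0) 85 = r2 := h2.symm
  rw [e, kerMainB] at h3
  have h4 : Nat.beq (Nat.mod (Nat.sub (Nat.add (Nat.mul 2 (kerTabF 0 r1)) 304045)
    (Nat.add (kerTabF b0 r0) (kerTabF b2 r2))) 43435) 0 = true :=
    Nat.beq_eq.mpr hd
  rw [h4, cond_true, kerOk, decide_eq_true_eq] at h3
  simpa only [Fin.ofNat_eq_cast, Fin.cast_val_eq_self] using h3

/-- Number of occurrences of the letter `i` in the prefix of length `n`. -/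
def cntP (x : ℕ → Fin 4) (i : Fin 4) : ℕ → ℕ
  | 0 => 0
  | n + 1 => cntP x i n + if x n = i then 1 else 0

/-- An abelian square at position `p` with period `m`. -/
def AbSq (x : ℕ → Fin 4) (p m : ℕ) : Prop :=
  ∀ i, cntP x i p + cntP x i (p + 2 * m) = 2 * cntP x i (p + m)

/-- `x` has no abelian squares of period less than `L`. -/
def NoSq (x : ℕ → Fin 4) (L : ℕ) : Prop := ∀ p m, 0 < m → m < L → ¬ AbSq x p m

/-- The image of an infinite word under Keränen's morphism. -/
def kerG (x : ℕ → Fin 4) (n : ℕ) : Fin 4 := x (n / 85) + kerK (n % 85)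

theorem cntP_sum (x : ℕ → Fin 4) (n : ℕ) : ∑ i, cntP x i n = n := by
  induction n with
  | zero => simp [cntP]
  | succ n ih => simp [cntP, Finset.sum_add_distrib, ih]

theorem cntP_add {x : ℕ → Fin 4} {L : ℕ} (hx : ∀ n, x (n + L) = x n) (i : Fin 4) (n : ℕ) :
    cntP x i (n + L) = cntP x i n + cntP x i L := by
  induction n with
  | zero => simp [cntP]
  | succ n ih =>
    rw [show n + 1 + L = (n + L) + 1 by ring]
    simp only [cntP, hx, ih]
    ring

theorem noSq_of_half {x : ℕ → Fin 4} {L : ℕ} (hx : ∀ n, x (n + L) = x n)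
    (h : ∀ p m, 0 < m → 2 * m ≤ L → ¬ AbSq x p m) : NoSq x L := by
  intro p m hm hmL hs
  by_cases h2 : 2 * m ≤ L
  · exact h p m hm h2 hs
  · refine h (p + 2 * m) (L - m) (by omega) (by omega) ?_
    intro i
    have e1 : p + 2 * m + 2 * (L - m) = (p + L) + L := by omega
    have e2 : p + 2 * m + (L - m) = (p + m) + L := by omega
    rw [e1, e2, cntP_add hx, cntP_add hx, cntP_add hx]
    have := hs i
    omega

theorem absq_one {x : ℕ → Fin 4} {p : ℕ} (h : x p = x (p + 1)) : AbSq x p 1 := by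
  intro i
  simp only [cntP, h]
  ring

/-- Weighted prefix sums. -/
def kerH (y : ℕ → Fin 4) (i : Fin 4) (n : ℕ) : ℕ := ∑ l, kerW (l - i) * cntP y l n

theorem kerH_succ (y : ℕ → Fin 4) (i : Fin 4) (n : ℕ) :
    kerH y i (n + 1) = kerH y i n + kerW (y n - i) := by
  simp [kerH, cntP, mul_add, Finset.sum_add_distrib]

theorem kerH_sq {y : ℕ → Fin 4} {p m : ℕ} (h : AbSq y p m) (i : Fin 4) :
    kerH y i p + kerH y i (p + 2 * m) = 2 * kerH y i (p + m) := by
  simp only [kerH, ← Finset.sum_add_distrib, Finset.mul_sum]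
  refine Finset.sum_congr rfl fun l _ => ?_
  rw [← mul_add, h l]
  ring

theorem kerH_G (x : ℕ → Fin 4) (i : Fin 4) (k r : ℕ) (hr : r ≤ 85) :
    kerH (kerG x) i (85 * k + r) + 86870 =
      43435 * cntP x i k + kerTab (x k - i : Fin 4) r + 2316 * (85 * k + r) := by
  induction k generalizing r with
  | zero =>
    induction r with
    | zero => simp [kerH, cntP, kerTab_zero]
    | succ r ih =>
      have h1 := ih (by omega)
      have h2 := kerTab_step (x 0 - i) r (by omega)
      rw [← add_assoc, kerH_succ]
      have e : kerG x (85 * 0 + r) - i = x 0 - i + kerK r := by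
        rw [kerG, show (85 * 0 + r) / 85 = 0 by omega, show (85 * 0 + r) % 85 = r by omega]
        abel
      rw [e]
      omega
  | succ k ihk =>
    induction r with
    | zero =>
      have h1 := ihk 85 le_rfl
      rw [show 85 * (k + 1) + 0 = 85 * k + 85 by ring]
      rw [h1, kerTab_zero, kerTab_last]
      simp only [cntP, sub_eq_zero]
      split_ifs <;> ring
    | succ r ih =>
      have h1 := ih (by omega)
      have h2 := kerTab_step (x (k + 1) - i) r (by omega)
      rw [← add_assoc, kerH_succ]
      have e : kerG x (85 * (k + 1) + r) - i = x (k + 1) - i + kerK r := by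
        rw [kerG, show (85 * (k + 1) + r) / 85 = k + 1 by omega,
          show (85 * (k + 1) + r) % 85 = r by omega]
        abel
      rw [e]
      omega

theorem cntP_shift (x : ℕ → Fin 4) (i : Fin 4) (k : ℕ) (d : Fin 2) :
    cntP x i (k + d.val) = cntP x i k + if x k = i then d.val else 0 := by
  fin_cases d
  · simp
  · simp [cntP]

/-- Squares in the image come from squares in the preimage. -/
theorem kerG_pull {x : ℕ → Fin 4} {p m : ℕ} (h : AbSq (kerG x) p m) :
    ∃ d0 d1 d2 : Fin 2, ∀ i, cntP x i (p / 85 + d0) + cntP x i ((p + 2 * m) / 85 + d2) =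
      2 * cntP x i ((p + m) / 85 + d1) := by
  obtain ⟨k0, r0, hr0, e0⟩ : ∃ k r, r < 85 ∧ p = 85 * k + r :=
    ⟨p / 85, p % 85, by omega, by omega⟩
  obtain ⟨k1, r1, hr1, e1⟩ : ∃ k r, r < 85 ∧ p + m = 85 * k + r :=
    ⟨(p + m) / 85, (p + m) % 85, by omega, by omega⟩
  obtain ⟨k2, r2, hr2, e2⟩ : ∃ k r, r < 85 ∧ p + 2 * m = 85 * k + r :=
    ⟨(p + 2 * m) / 85, (p + 2 * m) % 85, by omega, by omega⟩
  rw [show p / 85 = k0 by omega, show (p + m) / 85 = k1 by omega,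
    show (p + 2 * m) / 85 = k2 by omega]
  have key : ∀ i, 43435 * (cntP x i k0 + cntP x i k2) + kerTab (x k0 - i : Fin 4) r0
      + kerTab (x k2 - i : Fin 4) r2 = 43435 * (2 * cntP x i k1)
      + 2 * kerTab (x k1 - i : Fin 4) r1 := by
    intro i
    have hs := kerH_sq h i
    have g0 := kerH_G x i k0 r0 hr0.le
    have g1 := kerH_G x i k1 r1 hr1.le
    have g2 := kerH_G x i k2 r2 hr2.le
    rw [← e0] at g0
    rw [← e1] at g1
    rw [← e2] at g2
    omega
  have hd : (2 * kerTab 0 r1 + 304045 - (kerTab (x k0 - x k1 : Fin 4) r0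
      + kerTab (x k2 - x k1 : Fin 4) r2)) % 43435 = 0 := by
    have hk := key (x k1)
    rw [sub_self] at hk
    have b0 := kerTab_bd (x k0 - x k1) r0 hr0
    have b2 := kerTab_bd (x k2 - x k1) r2 hr2
    simp only [Fin.val_zero] at hk
    omega
  obtain ⟨d0, d1, d2, hh⟩ := ker_main r0 r1 r2 _ _ hr0 hr1 (by omega) hd
  refine ⟨d0, d1, d2, fun i => ?_⟩
  have h1 := hh (i - x k1)
  have h2 := key i
  simp only [sub_sub_sub_cancel_right, sub_left_inj, zero_sub, neg_sub] at h1
  have hz : (0 = i - x k1) ↔ x k1 = i := by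
    rw [eq_comm, sub_eq_zero, eq_comm]
  simp only [hz] at h1
  rw [cntP_shift, cntP_shift, cntP_shift]
  omega

theorem kerG_short {x : ℕ → Fin 4} {p m : ℕ} (hx : ∀ n, x n ≠ x (n + 1)) (hm : 0 < m)
    (hpm : (p + 2 * m) / 85 ≤ p / 85 + 1) : ¬ AbSq (kerG x) p m := by
  intro h
  obtain ⟨k, r, hr, e⟩ : ∃ k r, r < 85 ∧ p = 85 * k + r :=
    ⟨p / 85, p % 85, by omega, by omega⟩
  have hu : ∀ s, s < 170 → kerH (kerG x) (x k) (85 * k + s) + 86870 =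
      43435 * cntP x (x k) k + kerU (x (k + 1) - x k : Fin 4) s + 2316 * (85 * k + s) := by
    intro s hs
    by_cases h85 : s < 85
    · have := kerH_G x (x k) k s h85.le
      rw [sub_self] at this
      rw [kerU_lt _ _ h85]
      exact this
    · have := kerH_G x (x k) (k + 1) (s - 85) (by omega)
      rw [kerU_ge _ _ (by omega)]
      rw [show 85 * (k + 1) + (s - 85) = 85 * k + s by omega] at this
      rw [this]
      simp only [cntP, if_true]
      omega
  have hne : x (k + 1) - x k ≠ 0 := by
    rw [sub_ne_zero]
    exact (hx k).symm
  refine ker_short _ hne r m hr hm (by omega) ?_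
  have hs := kerH_sq h (x k)
  have g0 := hu r (by omega)
  have g1 := hu (r + m) (by omega)
  have g2 := hu (r + 2 * m) (by omega)
  rw [e] at hs
  rw [← add_assoc] at g1 g2
  omega

theorem kerG_per {x : ℕ → Fin 4} {L : ℕ} (hx : ∀ n, x (n + L) = x n) (n : ℕ) :
    kerG x (n + 85 * L) = kerG x n := by
  rw [kerG, kerG, show (n + 85 * L) / 85 = n / 85 + L by omega,
    show (n + 85 * L) % 85 = n % 85 by omega, hx]

theorem kerG_noSq {x : ℕ → Fin 4} {L : ℕ} (hL : 3 ≤ L) (hx : ∀ n, x (n + L) = x n)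
    (h : NoSq x L) : NoSq (kerG x) (85 * L) := by
  refine noSq_of_half (kerG_per hx) ?_
  intro p m hm hmL hs
  obtain ⟨d0, d1, d2, hh⟩ := kerG_pull hs
  have hsum : (p / 85 + d0) + ((p + 2 * m) / 85 + d2) = 2 * ((p + m) / 85 + d1) := by
    have := Finset.sum_congr (rfl : (Finset.univ : Finset (Fin 4)) = _) fun i _ => hh i
    rw [Finset.sum_add_distrib, ← Finset.mul_sum, cntP_sum, cntP_sum, cntP_sum] at this
    exact this
  have l0 := d0.isLt
  have l1 := d1.isLt
  have l2 := d2.isLt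
  by_cases hz : p / 85 + d0.val = (p + m) / 85 + d1.val
  · refine kerG_short (fun n hn => ?_) hm (by omega) hs
    exact h n 1 one_pos (by omega) (absq_one hn)
  · obtain ⟨q, hq⟩ : ∃ q, (p + m) / 85 + d1.val = (p / 85 + d0.val) + q :=
      ⟨(p + m) / 85 + d1.val - (p / 85 + d0.val), by omega⟩
    refine h (p / 85 + d0) q (by omega) (by omega) fun i => ?_
    have := hh i
    rw [hq, show (p + 2 * m) / 85 + d2.val = (p / 85 + d0.val) + 2 * q by omega] at this
    exact this

theorem ker_exists (n : ℕ) : ∃ (x : ℕ → Fin 4) (L : ℕ), n ≤ L ∧ 3 ≤ L ∧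
    (∀ k, x (k + L) = x k) ∧ NoSq x L := by
  induction n with
  | zero =>
    refine ⟨fun n => Fin.ofNat 4 (n % 3), 3, by omega, le_rfl, fun k => by simp, ?_⟩
    refine noSq_of_half (fun k => by simp) fun p m hm hm3 hs => ?_
    obtain rfl : m = 1 := by omega
    have h0 := hs (Fin.ofNat 4 (p % 3))
    simp only [cntP, if_true] at h0
    have hne : Fin.ofNat 4 ((p + 1) % 3) ≠ Fin.ofNat 4 (p % 3) := by
      intro hc
      have := congrArg Fin.val hc
      simp only [Fin.ofNat] at this
      omega
    rw [if_neg hne] at h0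
    omega
  | succ n ih =>
    obtain ⟨x, L, h1, h2, h3, h4⟩ := ih
    exact ⟨kerG x, 85 * L, by omega, by omega, kerG_per h3, kerG_noSq h2 h3 h4⟩

theorem count_map_range (x : ℕ → Fin 4) (i : Fin 4) (n : ℕ) :
    ((List.range n).map x).count i = cntP x i n := by
  induction n with
  | zero => rfl
  | succ n ih =>
    rw [List.range_succ, List.map_append, List.count_append, ih, cntP]
    simp [List.count_singleton]

theorem flatten_replicate_map {x : ℕ → Fin 4} {L : ℕ} (hx : ∀ n, x (n + L) = x n) (k : ℕ) :
    (List.replicate k ((List.range L).map x)).flatten = (List.range (L * k)).map x := by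
  induction k with
  | zero => simp
  | succ k ih =>
    have hx' : ∀ n, x (L + n) = x n := fun n => by rw [add_comm, hx]
    rw [List.replicate_succ, List.flatten_cons, ih, show L * (k + 1) = L + L * k by ring,
      List.range_add, List.map_append, List.map_map]
    congr 1
    exact List.map_congr_left fun n _ => (hx' n).symm

theorem count_prefix {x : ℕ → Fin 4} {N : ℕ} {s t : List (Fin 4)}
    (h : s ++ t = (List.range N).map x) (i : Fin 4) : s.count i = cntP x i s.length := by
  have hl := congrArg List.length h
  simp only [List.length_append, List.length_map, List.length_range] at hl
  have h1 : s = ((List.range N).map x).take s.length := by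
    rw [← h]; simp
  rw [← List.map_take, List.take_range, min_eq_left (by omega)] at h1
  conv_lhs => rw [h1]
  exact count_map_range x i _

theorem arbitrarily_long_quaternary_avoid_abelian_squares_cyclically :
    ∀ n : ℕ, 0 < n → ∃ w : List (Fin 4), n ≤ w.length ∧ AvoidsAbelianCyc 2 w := by
  intro n _
  obtain ⟨x, L, hn, _, hx, hs⟩ := ker_exists n
  refine ⟨(List.range L).map x, by simpa using hn, ?_⟩
  rintro m u ⟨hm, f, hu, hlen, hperm⟩ ⟨k, s, t, hst⟩
  rw [flatten_replicate_map hx] at hst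
  by_contra hlt
  simp only [List.length_map, List.length_range, not_le] at hlt
  have hu' : u = f 0 ++ f 1 := by simp [hu, List.ofFn_succ]
  subst hu'
  refine hs s.length m hm hlt fun i => ?_
  have c0 := count_prefix (s := s) (t := f 0 ++ f 1 ++ t) (by simpa using hst) i
  have c1 := count_prefix (s := s ++ f 0) (t := f 1 ++ t) (by simpa using hst) i
  have c2 := count_prefix (s := s ++ f 0 ++ f 1) (t := t) (by simpa using hst) i
  have hp := (hperm 0 1).count_eq i
  simp only [List.length_append, hlen, List.count_append] at c0 c1 c2
  rw [show s.length + m + m = s.length + 2 * m by ring] at c2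
  omega
end

section
/- A nonempty word w avoids abelian |w|-powers cyclically if and only if for each positive integer k < |w|, the word w^k is not conjugate to an abelian power whose period is less than |w|. -/
/-- Two words are conjugate if one is a rotation of the other. -/
def Conjugate {α : Type*} (u v : List α) : Prop :=
  ∃ x y : List α, u = x ++ y ∧ v = y ++ x

theorem flat_getElem {β : Type*} (w : List β) (k i : ℕ) (h : i < k * w.length) :
    (List.replicate k w).flatten[i]? = w[i % w.length]? := by
  induction k generalizing i with
  | zero => simp at h
  | succ k ih =>
    rw [List.replicate_succ, List.flatten_cons]
    by_cases hi : i < w.length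
    · rw [List.getElem?_append_left hi, Nat.mod_eq_of_lt hi]
    · push Not at hi
      rw [List.getElem?_append_right hi, ih _ (by rw [Nat.succ_mul] at h; omega),
        ← Nat.mod_eq_sub_mod hi]

theorem flat_length {β : Type*} (w : List β) (k : ℕ) :
    (List.replicate k w).flatten.length = k * w.length := by
  simp

theorem word_conj_pow {β : Type*} (x y : List β) (k : ℕ) :
    x ++ (List.replicate k (y ++ x)).flatten ++ y
      = (List.replicate (k + 1) (x ++ y)).flatten := by
  induction k with
  | zero => simp
  | succ k ih =>
    rw [List.replicate_succ (n := k + 1), List.flatten_cons, ← ih, List.replicate_succ,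
      List.flatten_cons]
    simp

theorem power_length {α : Type*} {N m : ℕ} {u : List α} (h : IsAbelianPower N m u) :
    u.length = N * m := by
  obtain ⟨_, f, rfl, hl, _⟩ := h
  rw [List.length_flatten, List.map_ofFn, List.sum_ofFn]
  simp [hl]

theorem conj_of_factor {α : Type*} (w u : List α) (m : ℕ)
    (hu : u.length = m * w.length) (h : OccursCyc w u) :
    Conjugate ((List.replicate m w).flatten) u := by
  obtain ⟨K, s, t, e⟩ := h
  have hr : u = (List.replicate m w).flatten.rotate s.length := by
    apply List.ext_getElem?
    intro i
    by_cases hi : i < m * w.length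
    · rw [List.getElem?_rotate (by simpa using hi), flat_getElem _ _ _
        (by rw [flat_length]; exact Nat.mod_lt _ (by omega)), flat_length,
        Nat.mod_mul_left_mod]
      have hlen := congrArg List.length e
      rw [flat_length, List.length_append, List.length_append] at hlen
      rw [← flat_getElem w K (i + s.length) (by omega), ← e, List.append_assoc,
        List.getElem?_append_right (by omega), List.getElem?_append_left (by omega)]
      simp
    · rw [List.getElem?_eq_none (by omega), List.getElem?_eq_none (by simpa using hi)]
  rw [List.rotate_eq_drop_append_take_mod] at hr
  exact ⟨_, _, (List.take_append_drop _ _).symm, hr⟩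

theorem avoidance_characterization {α : Type*} (w : List α) (hw : w ≠ []) :
    AvoidsAbelianCyc w.length w ↔
      ∀ k : ℕ, 0 < k → k < w.length →
        ¬ ∃ (N m : ℕ) (v : List α), 2 ≤ N ∧ m < w.length ∧
            IsAbelianPower N m v ∧ Conjugate ((List.replicate k w).flatten) v := by
  constructor
  · rintro H k hk hkw ⟨N, m, v, hN, hm, ⟨hm0, f, hv, hl, hp⟩, x, y, hx, hy⟩
    have hN0 : 0 < N := by omega
    set n := w.length with hn
    let g : Fin n → List α := fun i => f ⟨i.1 % N, Nat.mod_lt _ hN0⟩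
    have hpre : List.ofFn g <+: (List.replicate n (List.ofFn f)).flatten := by
      rw [List.prefix_iff_getElem?]
      intro i hi
      rw [List.length_ofFn] at hi
      rw [flat_getElem]
      · have : i % N < N := Nat.mod_lt _ hN0
        simp [g, this]
      · rw [List.length_ofFn]; nlinarith
    have := H m (List.ofFn g).flatten
      ⟨hm0, g, rfl, fun i => hl _, fun i j => hp _ _⟩ ?_
    · omega
    · obtain ⟨t, ht⟩ := hpre
      refine ⟨(n + 1) * k, x, t.flatten ++ y, ?_⟩
      have h1 : (List.ofFn g).flatten ++ t.flatten = (List.replicate n (y ++ x)).flatten := by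
        rw [← List.flatten_append, ht, List.flatten_flatten, List.map_replicate, ← hv, hy]
      have h2 : (List.replicate ((n + 1) * k) w).flatten
          = (List.replicate (n + 1) (x ++ y)).flatten := by
        rw [← hx, ← List.flatten_replicate_replicate, List.flatten_flatten, List.map_replicate]
      rw [h2, ← word_conj_pow, ← h1]
      simp
  · intro H m u hu ho
    by_contra hlt
    push Not at hlt
    have h0 := hu.1
    exact H m h0 hlt ⟨w.length, m, u, by omega, hlt, hu,
      conj_of_factor w u m (by rw [power_length hu, Nat.mul_comm]) ho⟩
end

section
/- If a nonempty word w does not avoid abelian |w|-powers cyclically, then for every integer N ≥ 2, the word w does not avoid abelian N-powers cyclically. -/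
theorem aux_pow_add {α : Type*} (w : List α) (a b : ℕ) :
    (List.replicate (a + b) w).flatten
      = (List.replicate a w).flatten ++ (List.replicate b w).flatten := by
  rw [List.replicate_add, List.flatten_append]

theorem aux_conj {α : Type*} (s u x : List α) (m : ℕ)
    (h : s ++ u = (List.replicate m x).flatten ++ s) (N : ℕ) :
    s ++ (List.replicate N u).flatten = (List.replicate (m * N) x).flatten ++ s := by
  induction N with
  | zero => simp
  | succ N ih =>
    rw [aux_pow_add u N 1, ← List.append_assoc, ih, Nat.mul_succ, aux_pow_add x]
    simp [h]

theorem aux_periodic {α : Type*} (n : ℕ) (g : ℕ → List α) (hg : ∀ i, g (n + i) = g i) (N : ℕ) :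
    ((List.range (n * N)).map g).flatten
      = (List.replicate N ((List.range n).map g).flatten).flatten := by
  induction N with
  | zero => simp
  | succ N ih =>
    rw [Nat.mul_succ, Nat.add_comm, List.range_add, List.map_append, List.flatten_append,
      List.map_map, List.replicate_succ, List.flatten_cons, ← ih]
    congr 3
    funext i
    exact hg i

theorem not_avoid_length_power_implies_not_avoid_any {α : Type*} (w : List α)
    (hw : w ≠ []) (h : ¬ AvoidsAbelianCyc w.length w) :
    ∀ N : ℕ, 2 ≤ N → ¬ AvoidsAbelianCyc N w := by
  intro N hN hav
  apply h
  intro m u hu hocc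
  obtain ⟨hm, f, hf, hlen, hperm⟩ := hu
  have hn : 0 < w.length := List.length_pos_iff.mpr hw
  obtain ⟨k, s, t, hst⟩ := hocc
  have hulen : u.length = w.length * m := by
    rw [hf, List.length_flatten, List.map_ofFn, List.sum_ofFn]
    simp [hlen]
  have hconj : s ++ u = (List.replicate m w).flatten ++ s := by
    have h1 : s ++ u <+: (List.replicate (m + k) w).flatten := by
      rw [Nat.add_comm, aux_pow_add, ← hst, List.append_assoc (s ++ u)]
      exact List.prefix_append _ _
    have h2 : (List.replicate m w).flatten ++ s <+: (List.replicate (m + k) w).flatten := by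
      rw [aux_pow_add, ← hst]
      exact ⟨u ++ t, by simp⟩
    have h3 : (s ++ u).length = ((List.replicate m w).flatten ++ s).length := by
      simp [hulen, Nat.mul_comm, Nat.add_comm]
    exact (List.prefix_of_prefix_length_le h1 h2 h3.le).eq_of_length h3
  let g : ℕ → List α := fun i => f ⟨i % w.length, Nat.mod_lt _ hn⟩
  have hug : u = ((List.range w.length).map g).flatten := by
    rw [hf]
    congr 1
    apply List.ext_getElem
    · simp
    · intro i h1 h2
      have hi : i < w.length := by simpa using h1
      simp [g, Nat.mod_eq_of_lt hi]
  have hper := aux_periodic w.length g (fun i => by simp [g]) N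
  rw [← hug] at hper
  have hle : N ≤ w.length * N := Nat.le_mul_of_pos_left N hn
  obtain ⟨d, hd⟩ := Nat.exists_eq_add_of_le hle
  refine hav m ((List.range N).map g).flatten ⟨hm, fun i => g i, ?_, fun i => hlen _,
    fun i j => hperm _ _⟩ ⟨m * N + k, s, ?_⟩
  · congr 1
    apply List.ext_getElem <;> simp
  · rw [hd, List.range_add, List.map_append, List.flatten_append] at hper
    have hc := aux_conj s u w m hconj N
    rw [← hper] at hc
    refine ⟨(List.map g (List.map (fun x => N + x) (List.range d))).flatten
      ++ (u ++ t), ?_⟩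
    · rw [aux_pow_add, ← hst, List.append_assoc s u t, ← List.append_assoc _ s, ← hc]
      simp
end

section
/- Let w be a nonempty word over an alphabet A such that the greatest common divisor of the numbers of occurrences of the letters of A in w equals 1, i.e. gcd({|w|_a : a ∈ A}) = 1. Then w avoids abelian |w|-powers cyclically. -/
theorem count_prefix_aux {α : Type*} [DecidableEq α] (w : List α) (hw : w ≠ []) (a : α) (k : ℕ) :
    ∀ s : List α, s <+: (List.replicate k w).flatten →
      s.count a = (s.length / w.length) * w.count a + (w.take (s.length % w.length)).count a := by
  have hpos : 0 < w.length := List.length_pos_iff.mpr hw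
  induction k with
  | zero =>
    intro s hs
    have : s = [] := by simpa using hs
    subst this
    simp
  | succ k ih =>
    intro s hs
    rw [List.replicate_succ, List.flatten_cons] at hs
    rcases lt_or_ge s.length w.length with h | h
    · have h1 : s <+: w :=
        List.prefix_of_prefix_length_le hs (List.prefix_append _ _) h.le
      rw [Nat.div_eq_of_lt h, Nat.mod_eq_of_lt h, ← List.prefix_iff_eq_take.mp h1]
      simp
    · have h1 : w <+: s :=
        List.prefix_of_prefix_length_le (List.prefix_append _ _) hs h
      obtain ⟨t, rfl⟩ := h1
      have h2 := ih t ((List.prefix_append_right_inj w).mp hs)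
      rw [List.count_append, List.length_append, Nat.add_mod_left, Nat.add_div_left _ hpos, h2]
      ring

theorem gcd_one_avoids_abelian_length_powers_cyclically
    {α : Type*} [Fintype α] [DecidableEq α] (w : List α) (hw : w ≠ [])
    (hgcd : Finset.univ.gcd (fun a => w.count a) = 1) :
    AvoidsAbelianCyc w.length w := by
  rintro m u ⟨hm, f, rfl, hlen, hperm⟩ ⟨k, s, t, hst⟩
  have hpos : 0 < w.length := List.length_pos_iff.mpr hw
  have hul : (List.ofFn f).flatten.length = w.length * m := by
    simp [List.length_flatten, List.map_ofFn, List.sum_ofFn, hlen]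
  have hdvd : ∀ a, w.length ∣ m * w.count a := by
    intro a
    have h1 := count_prefix_aux w hw a k s ⟨_, by rw [← hst, List.append_assoc]⟩
    have h2 := count_prefix_aux w hw a k (s ++ (List.ofFn f).flatten) ⟨t, hst⟩
    rw [List.count_append, List.length_append, hul, Nat.add_mul_mod_self_left,
      Nat.add_mul_div_left _ _ hpos, h1] at h2
    have h3 : (List.ofFn f).flatten.count a = m * w.count a := by
      rw [add_mul] at h2
      omega
    rw [← h3]
    have h4 : ∀ i, (f i).count a = (f ⟨0, hpos⟩).count a := fun i => (hperm i _).count_eq a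
    refine ⟨(f ⟨0, hpos⟩).count a, ?_⟩
    simp [List.count_flatten, List.map_ofFn, List.sum_ofFn, h4]
  have h5 : w.length ∣ Finset.univ.gcd (fun a => m * w.count a) :=
    Finset.dvd_gcd fun a _ => hdvd a
  rw [Finset.gcd_mul_left, hgcd] at h5
  exact Nat.le_of_dvd hm (by simpa using h5)
end

section
/- Let x be a nonempty word and N ≥ 2. If the infinite word x^ω contains an abelian N-power of period m with |x|/2 ≤ m < |x|, then x^ω contains an abelian N-power of period |x| − m. Moreover, if x^ω begins with an abelian N-power of period m with |x|/2 < m < |x|, then x^{N−1} ends with an abelian N-power of period |x| − m. -/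
/-- The factor of length `l` at position `a` of the infinite word `g`. -/
def win {α : Type*} (g : ℕ → α) (a l : ℕ) : List α := (List.range' a l).map g

theorem win_length {α : Type*} (g : ℕ → α) (a l : ℕ) : (win g a l).length = l := by
  simp [win]

theorem win_add {α : Type*} (g : ℕ → α) (a l l' : ℕ) :
    win g a (l + l') = win g a l ++ win g (a + l) l' := by
  unfold win
  rw [← List.map_append, List.range'_append_1]

theorem win_period {α : Type*} (g : ℕ → α) (n : ℕ) (hg : ∀ i, g (i + n) = g i) (a l t : ℕ) :
    win g (a + t * n) l = win g a l := by
  have hg' : ∀ t i, g (i + t * n) = g i := by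
    intro t
    induction t with
    | zero => simp
    | succ t ih =>
      intro i
      rw [Nat.succ_mul, ← Nat.add_assoc, hg, ih]
  apply List.ext_getElem
  · simp [win]
  · intro i h1 h2
    simp only [win, List.getElem_map, List.getElem_range', one_mul]
    rw [← hg' t (a + i)]
    congr 1
    omega

theorem win_full {α : Type*} (g : ℕ → α) (n : ℕ) (hg : ∀ i, g (i + n) = g i) (a : ℕ) :
    (win g a n).Perm (win g 0 n) := by
  induction a with
  | zero => exact List.Perm.refl _
  | succ a ih =>
    refine List.Perm.trans ?_ ih
    have h1 := win_add g a 1 n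
    have h2 := win_add g a n 1
    rw [Nat.add_comm, h2] at h1
    have e1 : win g a 1 = [g a] := by simp [win]
    have e2 : win g (a + n) 1 = [g a] := by simp [win, hg]
    rw [e1, e2] at h1
    have h3 : (g a :: win g (a + 1) n).Perm (g a :: win g a n) := by
      rw [← List.singleton_append, ← h1]
      exact List.perm_append_singleton _ _
    exact h3.cons_inv

theorem win_blocks {α : Type*} (g : ℕ → α) (m N p : ℕ) :
    win g p (N * m) = (List.ofFn fun i : Fin N => win g (p + i * m) m).flatten := by
  induction N with
  | zero => simp [win]
  | succ N ih =>
    rw [Nat.succ_mul, win_add, ih, List.ofFn_succ_last]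
    simp

theorem win_blocks_perm {α : Type*} (g : ℕ → α) (m N p L : ℕ)
    (h : IsAbelianPower N m (win g p L)) :
    L = N * m ∧ ∀ i j, i < N → j < N → (win g (p + i * m) m).Perm (win g (p + j * m) m) := by
  obtain ⟨hm, f, hu, hl, hp⟩ := h
  have hL : L = N * m := by
    have := congrArg List.length hu
    rw [win_length, List.length_flatten, List.map_ofFn] at this
    have e : List.length ∘ f = fun _ => m := funext hl
    rw [e] at this
    simpa using this
  refine ⟨hL, ?_⟩
  rw [hL, win_blocks] at hu
  have h2 := List.eq_iff_flatten_eq.2 ⟨hu, by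
    rw [List.map_ofFn, List.map_ofFn]
    congr 1
    funext i
    simp [win_length, hl]⟩
  have h3 := List.ofFn_injective h2
  intro i j hi hj
  have a := congrFun h3 ⟨i, hi⟩
  have b := congrFun h3 ⟨j, hj⟩
  simp only at a b
  rw [a, b]
  exact hp _ _

theorem core {α : Type*} (g : ℕ → α) (n : ℕ) (hg : ∀ i, g (i + n) = g i)
    (m N p L t r : ℕ) (hmn : m < n) (h : IsAbelianPower N m (win g p L))
    (hr : r + N * (n - m) = p + t * n) :
    IsAbelianPower N (n - m) (win g r (N * (n - m))) := by
  obtain ⟨-, hp⟩ := win_blocks_perm g m N p L h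
  obtain ⟨d, rfl⟩ : ∃ d, n = m + d := ⟨n - m, by omega⟩
  simp only [Nat.add_sub_cancel_left] at hr ⊢
  refine ⟨by omega, _, win_blocks g d N r, fun i => win_length _ _ _, ?_⟩
  have key : ∀ i : Fin N, ∃ j < N, win g (r + i * d) d = win g (p + j * m + m) d := by
    intro i
    obtain ⟨j, hj⟩ : ∃ j, N = i + j + 1 := ⟨N - i - 1, by omega⟩
    refine ⟨j, by omega, ?_⟩
    rw [← win_period g (m + d) hg _ d (j + 1), ← win_period g (m + d) hg (p + j * m + m) d t]
    congr 1
    rw [hj] at hr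
    nlinarith
  intro i j
  obtain ⟨a, ha, ea⟩ := key i
  obtain ⟨b, hb, eb⟩ := key j
  rw [ea, eb]
  have h1 := (win_full g (m + d) hg (p + a * m)).trans (win_full g (m + d) hg (p + b * m)).symm
  rw [win_add, win_add] at h1
  have h2 := (List.Perm.append_right (win g (p + a * m + m) d) (hp b a hb ha)).trans h1
  exact (List.perm_append_left_iff _).1 h2

theorem exists_periodic {α : Type*} (x : List α) (hx : x ≠ []) :
    ∃ g : ℕ → α, (∀ i, g (i + x.length) = g i) ∧
      ∀ k, (List.replicate k x).flatten = win g 0 (k * x.length) := by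
  have hn : 0 < x.length := List.length_pos_iff.2 hx
  let g : ℕ → α := fun i => x[i % x.length]'(Nat.mod_lt _ hn)
  have hg : ∀ i, g (i + x.length) = g i := by intro i; simp [g]
  refine ⟨g, hg, ?_⟩
  intro k
  induction k with
  | zero => simp [win]
  | succ k ih =>
    rw [List.replicate_succ', Nat.succ_mul, win_add, List.flatten_append, ih,
      win_period g _ hg]
    congr 1
    apply List.ext_getElem
    · simp [win]
    · intro i h1 h2
      have h3 : i < x.length := by simpa [win] using h2
      simp [win, g, Nat.mod_eq_of_lt h3]

theorem infix_win {α : Type*} (g : ℕ → α) (L : ℕ) (s u t : List α)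
    (h : s ++ u ++ t = win g 0 L) : u = win g s.length u.length := by
  have hL := congrArg List.length h
  simp only [List.length_append, win_length] at hL
  rw [← hL, win_add, win_add] at h
  have h1 := (List.append_inj h (by simp [win_length])).1
  have h2 := (List.append_inj h1 (by simp [win_length])).2
  simpa using h2

theorem reduction_short {α : Type*} (x : List α) (hx : x ≠ []) (N : ℕ) (hN : 2 ≤ N)
    (m : ℕ) :
    ((x.length ≤ 2 * m ∧ m < x.length ∧
        ∃ u : List α, IsAbelianPower N m u ∧ OccursCyc x u) →
      ∃ v : List α, IsAbelianPower N (x.length - m) v ∧ OccursCyc x v) ∧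
    ((x.length < 2 * m ∧ m < x.length ∧
        ∃ u : List α, IsAbelianPower N m u ∧ ∃ k : ℕ, u <+: (List.replicate k x).flatten) →
      ∃ v : List α, IsAbelianPower N (x.length - m) v ∧
        v <:+ (List.replicate (N - 1) x).flatten) := by
  obtain ⟨g, hg, hw⟩ := exists_periodic x hx
  constructor
  · rintro ⟨h1, h2, u, hu, k, s, t, hst⟩
    rw [hw] at hst
    have e := infix_win g _ s u t hst
    rw [e] at hu
    have hle : N * (x.length - m) ≤ N * x.length := Nat.mul_le_mul_left _ (Nat.sub_le _ _)
    obtain ⟨r, hr⟩ : ∃ r, r + N * (x.length - m) = s.length + N * x.length :=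
      ⟨s.length + N * x.length - N * (x.length - m), by omega⟩
    refine ⟨_, core g _ hg m N _ _ N r h2 hu hr, s.length + N, ?_⟩
    rw [hw]
    have hn : 0 < x.length := by omega
    obtain ⟨c, hc⟩ : ∃ c, (s.length + N) * x.length = r + N * (x.length - m) + c := by
      refine Nat.exists_eq_add_of_le ?_
      rw [hr, Nat.add_mul]
      have := Nat.le_mul_of_pos_right s.length hn
      omega
    rw [hc, win_add, win_add, Nat.zero_add]
    exact ⟨_, _, rfl⟩
  · rintro ⟨h1, h2, u, hu, k, t, hst⟩
    rw [hw] at hst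
    have e := infix_win g _ [] u t hst
    rw [e] at hu
    have hle : N * (x.length - m) ≤ (N - 1) * x.length := by
      obtain ⟨M, rfl⟩ : ∃ M, N = M + 2 := ⟨N - 2, by omega⟩
      obtain ⟨d, hd⟩ : ∃ d, x.length = m + d := ⟨x.length - m, by omega⟩
      rw [hd] at h1 ⊢
      have e1 : M + 2 - 1 = M + 1 := by omega
      rw [Nat.add_sub_cancel_left, e1]
      nlinarith [Nat.zero_le (M * m)]
    obtain ⟨r, hr⟩ : ∃ r, r + N * (x.length - m) = (N - 1) * x.length :=
      ⟨(N - 1) * x.length - N * (x.length - m), by omega⟩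
    refine ⟨_, core g _ hg m N _ _ (N - 1) r h2 hu (by simpa using hr), ?_⟩
    rw [hw, ← hr, win_add, Nat.zero_add]
    exact ⟨_, rfl⟩
end
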